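/- arXiv:2507.11738 — 9 statements merged into one kernel-verified Lean document; each statement's English description precedes it below -/
import Mathlib

section
/- Let e, m, n be natural numbers with 2 ≤ m < n ≤ e − 2 and (m, n) = (2, 3). Then the Frobenius number of S_{e,2,3} (the greatest natural number not belonging to S_{e,2,3}) equals 2e + 3; that is, 2e + 3 ∉ S_{e,2,3} and every natural number strictly greater than 2e + 3 belongs to S_{e,2,3}. -/
/-! For `(m, n) = (2, 3)` the generators are `e`, `e + 1` and `e + 4, …, 2e - 1`, with `e ≥ 5`.
The set `{0, e, e + 1} ∪ {x ≥ e + 4 : x ≠ 2e + 3}` contains them and is closed under addition,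
so `2e + 3` is not in the semigroup. Conversely, the `e` consecutive numbers
`2e + 4, …, 3e + 3` are sums of generators: those below `3e` are `e + (e + k)` with
`4 ≤ k ≤ e - 1`, and `3e, …, 3e + 3` are sums of three terms from `{e, e + 1}`.
Adding multiples of `e` reaches every larger number. -/

/-- The Sally type numerical semigroup `S_{e,m,n}`: the additive submonoid of `ℕ`
generated by `{e + i : 0 ≤ i ≤ e - 1, i ≠ m, i ≠ n}`. -/
def sallySemigroup (e m n : ℕ) : AddSubmonoid ℕ :=
  AddSubmonoid.closure {s : ℕ | ∃ i : ℕ, i ≤ e - 1 ∧ i ≠ m ∧ i ≠ n ∧ s = e + i}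

theorem stmt_0 (e m n : ℕ) (hm : 2 ≤ m) (hmn : m < n) (hn : n ≤ e - 2)
    (hm2 : m = 2) (hn3 : n = 3) :
    2 * e + 3 ∉ sallySemigroup e m n ∧
      ∀ s : ℕ, 2 * e + 3 < s → s ∈ sallySemigroup e m n := by
  subst hm2 hn3
  have gen : ∀ i, i ≤ e - 1 → i ≠ 2 → i ≠ 3 → e + i ∈ sallySemigroup e 2 3 :=
    fun i h1 h2 h3 => AddSubmonoid.subset_closure ⟨i, h1, h2, h3, rfl⟩
  have g0 : e ∈ sallySemigroup e 2 3 := gen 0 (by omega) (by omega) (by omega)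
  have g1 : e + 1 ∈ sallySemigroup e 2 3 := gen 1 (by omega) (by omega) (by omega)
  constructor
  · intro h
    have key : ∀ x ∈ sallySemigroup e 2 3,
        x = 0 ∨ x = e ∨ x = e + 1 ∨ (e + 4 ≤ x ∧ x ≠ 2 * e + 3) := by
      intro x hx
      induction hx using AddSubmonoid.closure_induction with
      | mem x hx => obtain ⟨i, h1, h2, h3, rfl⟩ := hx; omega
      | zero => exact Or.inl rfl
      | add x y _ _ hx hy => omega
    have := key _ h
    omega
  · intro s
    induction s using Nat.strong_induction_on with
    | _ s ih =>
      intro hs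
      by_cases hbig : 3 * e + 3 < s
      · have h := add_mem (ih (s - e) (by omega) (by omega)) g0
        rwa [Nat.sub_add_cancel (by omega)] at h
      by_cases hlt : s < 3 * e
      · have h := add_mem g0 (gen (s - 2 * e) (by omega) (by omega) (by omega))
        rwa [show e + (e + (s - 2 * e)) = s by omega] at h
      obtain h | h | h | h : s = e + e + e ∨ s = e + e + (e + 1) ∨
          s = e + (e + 1) + (e + 1) ∨ s = (e + 1) + (e + 1) + (e + 1) := by omega
      · exact h ▸ add_mem (add_mem g0 g0) g0
      · exact h ▸ add_mem (add_mem g0 g0) g1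
      · exact h ▸ add_mem (add_mem g0 g1) g1
      · exact h ▸ add_mem (add_mem g1 g1) g1
end

section
/- Let e, m, n be natural numbers with 2 ≤ m < n ≤ e − 2 and (m, n) ≠ (2, 3). Then the Frobenius number of S_{e,m,n} (the greatest natural number not belonging to S_{e,m,n}) equals e + n; that is, e + n ∉ S_{e,m,n} and every natural number strictly greater than e + n belongs to S_{e,m,n}. -/
theorem sallySemigroup_gen_mem {e m n i : ℕ} (hi : i ≤ e - 1) (him : i ≠ m) (hin : i ≠ n) :
    e + i ∈ sallySemigroup e m n :=
  AddSubmonoid.subset_closure ⟨i, hi, him, hin, rfl⟩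

/-- A sum of two nonzero elements is at least `2e`, so below `2e` only `0` and generators occur. -/
theorem sallySemigroup_gap {e m n s : ℕ} (hs : s ∈ sallySemigroup e m n) :
    s = 0 ∨ (e ≤ s ∧ s ≠ e + m ∧ s ≠ e + n) ∨ 2 * e ≤ s := by
  unfold sallySemigroup at hs
  induction hs using AddSubmonoid.closure_induction with
  | mem x hx =>
    obtain ⟨i, hi, him, hin, rfl⟩ := hx
    omega
  | zero => exact Or.inl rfl
  | add x y _ _ hx hy => omega

theorem sallySemigroup_pair_mem {e m n i j : ℕ} (hi : i ≤ e - 1) (him : i ≠ m) (hin : i ≠ n)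
    (hj : j ≤ e - 1) (hjm : j ≠ m) (hjn : j ≠ n) :
    2 * e + (i + j) ∈ sallySemigroup e m n := by
  have h := add_mem (sallySemigroup_gen_mem hi him hin) (sallySemigroup_gen_mem hj hjm hjn)
  rwa [show e + i + (e + j) = 2 * e + (i + j) by omega] at h

theorem sallySemigroup_block_mem {e m n : ℕ} (hm : 2 ≤ m) (hmn : m < n)
    (hne : ¬(m = 2 ∧ n = 3)) {k : ℕ} (hk : k < e) :
    2 * e + k ∈ sallySemigroup e m n := by
  by_cases h0 : k ≠ m ∧ k ≠ n
  · simpa using sallySemigroup_pair_mem (e := e) (m := m) (n := n) (i := 0) (j := k)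
      (by omega) (by omega) (by omega) (by omega) (by omega) (by omega)
  by_cases h1 : k - 1 = m
  · rw [show k = 2 + (k - 2) by omega]
    apply sallySemigroup_pair_mem <;> omega
  · rw [show k = 1 + (k - 1) by omega]
    apply sallySemigroup_pair_mem <;> omega

theorem sallySemigroup_mem_of_two_mul_le {e m n : ℕ} (hm : 2 ≤ m) (hmn : m < n) (hn : n ≤ e - 2)
    (hne : ¬(m = 2 ∧ n = 3)) (s : ℕ) (hs : 2 * e ≤ s) : s ∈ sallySemigroup e m n := by
  induction s using Nat.strong_induction_on with
  | _ s ih =>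
    by_cases h : s < 3 * e
    · rw [show s = 2 * e + (s - 2 * e) by omega]
      exact sallySemigroup_block_mem hm hmn hne (by omega)
    · have he : e + 0 ∈ sallySemigroup e m n :=
        sallySemigroup_gen_mem (by omega) (by omega) (by omega)
      have h' := add_mem he (ih (s - e) (by omega) (by omega))
      rwa [show e + 0 + (s - e) = s by omega] at h'

theorem stmt_1 (e m n : ℕ) (hm : 2 ≤ m) (hmn : m < n) (hn : n ≤ e - 2)
    (hne : ¬(m = 2 ∧ n = 3)) :
    e + n ∉ sallySemigroup e m n ∧
      ∀ s : ℕ, e + n < s → s ∈ sallySemigroup e m n := by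
  refine ⟨fun h => ?_, fun s hs => ?_⟩
  · have := sallySemigroup_gap h
    omega
  · by_cases h : 2 * e ≤ s
    · exact sallySemigroup_mem_of_two_mul_le hm hmn hn hne s h
    · rw [show s = e + (s - e) by omega]
      apply sallySemigroup_gen_mem <;> omega
end

section
/- Let e, m, n be natural numbers with 2 ≤ m < n ≤ e − 2 and (m, n) ≠ (2, 3). Then every natural number s with e + n + 1 ≤ s ≤ 2e + n belongs to S_{e,m,n}. -/
/-- Each `s` in the range is either itself a generator, when `s < 2 * e`, or `s = 2 * e + k` with
`0 ≤ k ≤ n`, a sum of two generators: `k = 0 + k` if `k ≠ m, n`; `m = 1 + (m - 1)`;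
`n = 1 + (n - 1)` if `n ≠ m + 1`; and `n = 2 + (m - 1)` if `n = m + 1`, where `(m, n) ≠ (2, 3)`
guarantees `m ≠ 2`. -/
theorem stmt_2 (e m n : ℕ) (hm : 2 ≤ m) (hmn : m < n) (hn : n ≤ e - 2)
    (hne : ¬(m = 2 ∧ n = 3)) :
    ∀ s : ℕ, e + n + 1 ≤ s → s ≤ 2 * e + n → s ∈ sallySemigroup e m n := by
  intro s h1 h2
  have gen : ∀ i : ℕ, i ≤ e - 1 → i ≠ m → i ≠ n → e + i ∈ sallySemigroup e m n :=
    fun i hi him hin => AddSubmonoid.subset_closure ⟨i, hi, him, hin, rfl⟩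
  have pair : ∀ i j : ℕ, i ≤ e - 1 → i ≠ m → i ≠ n → j ≤ e - 1 → j ≠ m → j ≠ n →
      s = (e + i) + (e + j) → s ∈ sallySemigroup e m n := by
    intro i j hi him hin hj hjm hjn hs
    rw [hs]
    exact add_mem (gen i hi him hin) (gen j hj hjm hjn)
  by_cases hs : s < 2 * e
  · have h := gen (s - e) (by omega) (by omega) (by omega)
    rwa [show e + (s - e) = s by omega] at h
  by_cases hsm : s = 2 * e + m
  · apply pair 1 (m - 1) <;> omega
  by_cases hsn : s = 2 * e + n
  · by_cases hc : n = m + 1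
    · apply pair 2 (m - 1) <;> omega
    · apply pair 1 (n - 1) <;> omega
  · apply pair 0 (s - 2 * e) <;> omega
end

section
/- Let e be a natural number with e ≥ 5 and let (m, n) = (2, 3). Then the genus of S_{e,2,3}, i.e., the cardinality of the finite set ℕ \ S_{e,2,3}, equals e + 2. -/
theorem add_mem_sallySemigroup {e i : ℕ} (hi : i ≤ e - 1) (h2 : i ≠ 2) (h3 : i ≠ 3) :
    e + i ∈ sallySemigroup e 2 3 :=
  AddSubmonoid.subset_closure ⟨i, hi, h2, h3, rfl⟩

/-- The conductor is at most `2e + 4`. The numbers `2e+4, …, 3e+3` form a run of `e` consecutive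
elements, so adding `e` reaches everything above them. -/
theorem mem_sallySemigroup_of_ge {e : ℕ} (he : 5 ≤ e) (s : ℕ) (hs : 2 * e + 4 ≤ s) :
    s ∈ sallySemigroup e 2 3 := by
  induction s using Nat.strong_induction_on with
  | _ s ih =>
    have h0 : e + 0 ∈ sallySemigroup e 2 3 :=
      add_mem_sallySemigroup (by omega) (by omega) (by omega)
    have h1 : e + 1 ∈ sallySemigroup e 2 3 :=
      add_mem_sallySemigroup (by omega) (by omega) (by omega)
    have hl : e + (e - 1) ∈ sallySemigroup e 2 3 :=
      add_mem_sallySemigroup (by omega) (by omega) (by omega)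
    by_cases hbig : 3 * e + 4 ≤ s
    · have h := add_mem h0 (ih (s - e) (by omega) (by omega))
      rwa [show e + 0 + (s - e) = s by omega] at h
    by_cases hsmall : s ≤ 3 * e - 1
    · have h := add_mem h0
        (add_mem_sallySemigroup (e := e) (i := s - 2 * e) (by omega) (by omega) (by omega))
      rwa [show e + 0 + (e + (s - 2 * e)) = s by omega] at h
    obtain rfl | rfl | rfl | rfl :
        s = 3 * e ∨ s = 3 * e + 1 ∨ s = 3 * e + 2 ∨ s = 3 * e + 3 := by omega
    · convert add_mem h1 hl using 1; omega
    · convert add_mem (add_mem h0 h0) h1 using 1; omega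
    · convert add_mem (add_mem h0 h1) h1 using 1; omega
    · convert add_mem (add_mem h1 h1) h1 using 1; omega

/-- The set on the right contains the generators and is closed under addition, hence contains the
semigroup. -/
theorem eq_of_mem_sallySemigroup {e : ℕ} (he : 5 ≤ e) {s : ℕ} (hs : s ∈ sallySemigroup e 2 3) :
    s = 0 ∨ s = e ∨ s = e + 1 ∨ (e + 4 ≤ s ∧ s ≠ 2 * e + 3) := by
  unfold sallySemigroup at hs
  induction hs using AddSubmonoid.closure_induction with
  | mem x hx =>
    obtain ⟨i, hi, h2, h3, rfl⟩ := hx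
    omega
  | zero => exact Or.inl rfl
  | add x y _ _ hx hy => omega

theorem mem_sallySemigroup_iff {e : ℕ} (he : 5 ≤ e) (s : ℕ) :
    s ∈ sallySemigroup e 2 3 ↔ s = 0 ∨ s = e ∨ s = e + 1 ∨ (e + 4 ≤ s ∧ s ≠ 2 * e + 3) := by
  refine ⟨eq_of_mem_sallySemigroup he, fun h => ?_⟩
  have h0 : e + 0 ∈ sallySemigroup e 2 3 :=
    add_mem_sallySemigroup (by omega) (by omega) (by omega)
  have h1 : e + 1 ∈ sallySemigroup e 2 3 :=
    add_mem_sallySemigroup (by omega) (by omega) (by omega)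
  obtain rfl | rfl | rfl | ⟨h4, h5⟩ := h
  · exact zero_mem _
  · exact h0
  · exact h1
  by_cases hbig : 2 * e + 4 ≤ s
  · exact mem_sallySemigroup_of_ge he s hbig
  by_cases hsmall : s ≤ 2 * e - 1
  · have h := add_mem_sallySemigroup (e := e) (i := s - e) (by omega) (by omega) (by omega)
    rwa [show e + (s - e) = s by omega] at h
  obtain rfl | rfl | rfl : s = 2 * e ∨ s = 2 * e + 1 ∨ s = 2 * e + 2 := by omega
  · convert add_mem h0 h0 using 1; omega
  · convert add_mem h0 h1 using 1; omega
  · convert add_mem h1 h1 using 1; omega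

theorem stmt_3 (e : ℕ) (he : 5 ≤ e) :
    {s : ℕ | s ∉ sallySemigroup e 2 3}.ncard = e + 2 := by
  have hgaps : {s : ℕ | s ∉ sallySemigroup e 2 3} =
      ((Finset.Icc 1 (e - 1) ∪ {e + 2, e + 3, 2 * e + 3} : Finset ℕ) : Set ℕ) := by
    ext s
    simp only [Set.mem_ofPred_eq, mem_sallySemigroup_iff he, Finset.coe_union, Set.mem_union,
      Finset.mem_coe, Finset.mem_Icc, Finset.mem_insert, Finset.mem_singleton]
    omega
  rw [hgaps, Set.ncard_coe_finset, Finset.card_union_of_disjoint]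
  · rw [Nat.card_Icc, Finset.card_eq_three.mpr
      ⟨e + 2, e + 3, 2 * e + 3, by omega, by omega, by omega, rfl⟩]
    omega
  · rw [Finset.disjoint_left]
    intro s
    simp only [Finset.mem_Icc, Finset.mem_insert, Finset.mem_singleton]
    omega
end

section
/- Let e, m, n be natural numbers with 2 ≤ m < n ≤ e − 2. Then F_{e,m,n} + 1 = 2 · g(S_{e,m,n}) if and only if (m, n) = (2, 3). (Equivalently, the Sally type numerical semigroup S_{e,m,n} is symmetric, i.e., its semigroup ring is Gorenstein, exactly when (m, n) = (2, 3).) -/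
/-- The Frobenius number of `S_{e,m,n}`: the greatest natural number not in the semigroup. -/
noncomputable def sallyFrobenius (e m n : ℕ) : ℕ :=
  sSup {s : ℕ | s ∉ sallySemigroup e m n}

/-- The genus of `S_{e,m,n}`: the number of gaps. -/
noncomputable def sallyGenus (e m n : ℕ) : ℕ :=
  {s : ℕ | s ∉ sallySemigroup e m n}.ncard

lemma sally_gen_mem {e m n : ℕ} (i : ℕ) (h : i ≤ e - 1) (h1 : i ≠ m) (h2 : i ≠ n) :
    e + i ∈ sallySemigroup e m n :=
  AddSubmonoid.subset_closure ⟨i, h, h1, h2, rfl⟩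

/-- The listed gaps are gaps: the complement of the list contains the generators and is closed
under addition. -/
lemma sally_mem_imp {e m n : ℕ} (hn : n ≤ e - 2) (hmn : m < n) (hm : 2 ≤ m) {s : ℕ}
    (hs : s ∈ sallySemigroup e m n) :
    s = 0 ∨ (e ≤ s ∧ s ≠ e + m ∧ s ≠ e + n ∧ ¬ (m = 2 ∧ n = 3 ∧ s = 2 * e + 3)) := by
  unfold sallySemigroup at hs
  induction hs using AddSubmonoid.closure_induction with
  | mem x hx =>
    obtain ⟨i, h1, h2, h3, rfl⟩ := hx
    omega
  | zero => exact Or.inl rfl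
  | add x y _ _ hx hy => omega

lemma sally_mem_of_two_mul_le {e m n : ℕ} (hn : n ≤ e - 2) (hmn : m < n) (hm : 2 ≤ m) (s : ℕ)
    (hs : 2 * e ≤ s) (hbad : ¬ (m = 2 ∧ n = 3 ∧ s = 2 * e + 3)) :
    s ∈ sallySemigroup e m n := by
  induction s using Nat.strong_induction_on with
  | _ s ih =>
  have two : ∀ i j : ℕ, i ≤ e - 1 → i ≠ m → i ≠ n → j ≤ e - 1 → j ≠ m → j ≠ n →
      s = (e + i) + (e + j) → s ∈ sallySemigroup e m n := by
    intro i j hi hi1 hi2 hj hj1 hj2 h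
    rw [h]
    exact add_mem (sally_gen_mem i hi hi1 hi2) (sally_gen_mem j hj hj1 hj2)
  by_cases h3 : s < 3 * e
  · by_cases h1 : s = 2 * e + m
    · apply two 1 (m - 1) <;> omega
    by_cases h2 : s = 2 * e + n
    · by_cases h4 : n = m + 1
      · apply two 2 (n - 2) <;> omega
      · apply two 1 (n - 1) <;> omega
    · apply two 0 (s - 2 * e) <;> omega
  · by_cases h4 : m = 2 ∧ n = 3 ∧ s = 3 * e + 3
    · have h5 : s = (e + 1) + (e + 1) + (e + 1) := by omega
      have h6 : e + 1 ∈ sallySemigroup e m n := by apply sally_gen_mem <;> omega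
      rw [h5]
      exact add_mem (add_mem h6 h6) h6
    · have h5 : s - e ∈ sallySemigroup e m n := by apply ih <;> omega
      have h6 : e + 0 ∈ sallySemigroup e m n := by apply sally_gen_mem <;> omega
      have h7 : s = (s - e) + (e + 0) := by omega
      rw [h7]
      exact add_mem h5 h6

lemma not_mem_sally_iff {e m n : ℕ} (hn : n ≤ e - 2) (hmn : m < n) (hm : 2 ≤ m) (s : ℕ) :
    s ∉ sallySemigroup e m n ↔
      (1 ≤ s ∧ s ≤ e - 1) ∨ s = e + m ∨ s = e + n ∨ (m = 2 ∧ n = 3 ∧ s = 2 * e + 3) := by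
  constructor
  · intro h
    by_contra hc
    apply h
    by_cases h0 : s = 0
    · rw [h0]
      exact zero_mem _
    by_cases h2 : 2 * e ≤ s
    · exact sally_mem_of_two_mul_le hn hmn hm s h2 (by omega)
    · have h3 : s = e + (s - e) := by omega
      rw [h3]
      apply sally_gen_mem <;> omega
  · intro h hs
    have := sally_mem_imp hn hmn hm hs
    omega

/-- `S_{e,m,n}` is symmetric (its semigroup ring is Gorenstein), i.e. `F + 1 = 2g`,
if and only if `(m, n) = (2, 3)`. -/
theorem stmt_5 (e m n : ℕ) (hm : 2 ≤ m) (hmn : m < n) (hn : n ≤ e - 2) :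
    sallyFrobenius e m n + 1 = 2 * sallyGenus e m n ↔ (m = 2 ∧ n = 3) := by
  have key := not_mem_sally_iff hn hmn hm
  by_cases h : m = 2 ∧ n = 3
  · have hF : sallyFrobenius e m n = 2 * e + 3 := by
      refine IsGreatest.csSup_eq ⟨(key _).2 (by omega), fun s hs => ?_⟩
      have := (key s).1 hs
      omega
    have hg : sallyGenus e m n = e + 2 := by
      have hset : {s : ℕ | s ∉ sallySemigroup e m n} =
          ↑(insert (2 * e + 3) (insert (e + m) (insert (e + n) (Finset.Icc 1 (e - 1))))) := by
        ext s
        simp only [Set.mem_ofPred_eq, key s, Finset.coe_insert, Set.mem_insert_iff,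
          Finset.coe_Icc, Set.mem_Icc]
        omega
      rw [sallyGenus, hset, Set.ncard_coe_finset, Finset.card_insert_of_notMem,
        Finset.card_insert_of_notMem, Finset.card_insert_of_notMem, Nat.card_Icc] <;>
      (try simp only [Finset.mem_insert, Finset.mem_Icc]) <;> omega
    omega
  · have hF : sallyFrobenius e m n = e + n := by
      refine IsGreatest.csSup_eq ⟨(key _).2 (by omega), fun s hs => ?_⟩
      have := (key s).1 hs
      omega
    have hg : sallyGenus e m n = e + 1 := by
      have hset : {s : ℕ | s ∉ sallySemigroup e m n} =
          ↑(insert (e + m) (insert (e + n) (Finset.Icc 1 (e - 1)))) := by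
        ext s
        simp only [Set.mem_ofPred_eq, key s, Finset.coe_insert, Set.mem_insert_iff,
          Finset.coe_Icc, Set.mem_Icc]
        omega
      rw [sallyGenus, hset, Set.ncard_coe_finset,
        Finset.card_insert_of_notMem, Finset.card_insert_of_notMem, Nat.card_Icc] <;>
      (try simp only [Finset.mem_insert, Finset.mem_Icc]) <;> omega
    omega
end

section
/- Let e, m, n be natural numbers with 3 ≤ m < n ≤ e − 2 and (m, n) ≠ (3, 4), and let k be a field. Then the minimal number of generators of the defining ideal I_{e,m,n} satisfies μ(I_{e,m,n}) = C(e−2, 2) − 2, where C(e−2, 2) denotes the binomial coefficient (e−2 choose 2). -/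
/-!
Write `x_i` for the variable `X_i` (and `0` when `i ∉ J`). Since `X_0 ↦ t^e` is a nonzerodivisor on
the semigroup ring, the minimal generators of `I` are those of its image modulo `X_0`. The Apéry set
of `S` with respect to `e` is `0`, the `e + i` with `i ∈ J \ {0}`, and `2e + m`, `2e + n`, so modulo
`X_0` one expects quadrics, `C(e-2, 2)` monomials in `e - 3` variables minus the two Apéry elements
of degree two. The proof makes this explicit.

For `w ∈ S` let `y w` (`sallyNF`) be a chosen monomial of weight `w`, containing as high a power of
`X_0` as possible; `y (2e+m) = x_1 x_{m-1}` and `y (2e+n) = x_p x_{n-p}`, with `p = 1` unless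
`n = m + 1`, where `p = 2`. The candidate generators are `g_{a,b} = x_a x_b - y (2e+a+b)` for
unordered pairs `{a,b}` in `J \ {0}` other than `{1, m-1}` and `{p, n-p}`, for which `g = 0`. There
are `C(e-2, 2) - 2` of them.

* They generate `I`. Modulo the `g_{a,b}` one has `y w * x_c = y (w+e+c)` (`sallyNF_mul`); the only
  nontrivial cases are the cubics `x_1 x_{m-1} x_c` and `x_p x_{n-p} x_c`, each of which can be
  rewritten so as to contain a pair of variables whose index sum is neither `m` nor `n`. This is
  where `(m, n) ≠ (3, 4)` is needed. Hence modulo the `g_{a,b}` every monomial equals `y` of its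
  weight, and a polynomial is determined by its image in `k[t]` (`ker_le_of_relations`).
* Fewer elements do not suffice. All of `I` has order at least two, so for `f ∈ I` the coefficients
  of `p f` at quadratic monomials are `p(0)` times those of `f` (`coeff_mul_of_degree_two`). Taking
  the coefficients at the monomials `x_a x_b` of the chosen pairs sends the `g_{a,b}` to the
  standard basis, which bounds the size of any generating set below (`card_le_of_span_eq`).
-/

/-- The index set `J = {i : i ≤ e - 1, i ≠ m, i ≠ n}` for the variables. -/
def sallyIndex (e m n : ℕ) : Type :=
  {i : ℕ // i ≤ e - 1 ∧ i ≠ m ∧ i ≠ n}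

/-- The defining ideal `I_{e,m,n}`: the kernel of the `k`-algebra map
`k[X_i : i ∈ J] → k[t]`, `X_i ↦ t^{e+i}`. -/
noncomputable def sallyIdeal (e m n : ℕ) (k : Type*) [Field k] :
    Ideal (MvPolynomial (sallyIndex e m n) k) :=
  RingHom.ker (MvPolynomial.aeval
    (fun i : sallyIndex e m n => (Polynomial.X : Polynomial k) ^ (e + i.1)) :
      MvPolynomial (sallyIndex e m n) k →ₐ[k] Polynomial k)

/-- `μ(I_{e,m,n})`: the minimal number of generators of the defining ideal, i.e.
the least cardinality of a subset whose ideal span is `I_{e,m,n}`. -/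
noncomputable def sallyMu (e m n : ℕ) (k : Type*) [Field k] : ℕ :=
  sInf {c : ℕ | ∃ F : Finset (MvPolynomial (sallyIndex e m n) k),
    F.card = c ∧ Ideal.span (F : Set (MvPolynomial (sallyIndex e m n) k)) = sallyIdeal e m n k}

/-! ### Normal forms -/

/-- Membership in the index set `J`. -/
def sallyJ (e m n i : ℕ) : Prop := i ≤ e - 1 ∧ i ≠ m ∧ i ≠ n

/-- Membership in the Sally semigroup: `0` and all numbers from `e` on except `e + m`, `e + n`
(this describes `S` under the hypotheses on `e, m, n` of the theorem). -/
def sallyS (e m n w : ℕ) : Prop := w = 0 ∨ (e ≤ w ∧ w ≠ e + m ∧ w ≠ e + n)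

/-- The smaller index in the chosen product `x_p x_{n-p}` of weight `2e + n`. Here `p = 1` is not
available when `n = m + 1`, because then `n - 1 = m ∉ J`. -/
def sallyP (m n : ℕ) : ℕ := if n = m + 1 then 2 else 1

/-- The normal form of weight `w`, as a product of values of a family `x`: as many factors `x 0`
as possible are split off. Only the values at `w` in the semigroup are meaningful. -/
def sallyNF {Q : Type*} [CommRing Q] (e m n : ℕ) (x : ℕ → Q) (w : ℕ) : Q :=
  if _h : e = 0 ∨ w < 2 * e then (if w = 0 then 1 else x (w - e))
  else if w = 2 * e + m then x 1 * x (m - 1)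
  else if w = 2 * e + n then x (sallyP m n) * x (n - sallyP m n)
  else x 0 * sallyNF e m n x (w - e)
termination_by w
decreasing_by omega

section NF

variable {Q : Type*} [CommRing Q] {e m n : ℕ} (x : ℕ → Q)

lemma sallyNF_zero : sallyNF e m n x 0 = 1 := by
  rw [sallyNF, dif_pos (by omega), if_pos rfl]

lemma sallyNF_lt {i : ℕ} (hi : i < e) : sallyNF e m n x (e + i) = x i := by
  rw [sallyNF, dif_pos (by omega), if_neg (by omega)]
  simp

lemma sallyNF_m (he : 0 < e) : sallyNF e m n x (2 * e + m) = x 1 * x (m - 1) := by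
  rw [sallyNF, dif_neg (by omega), if_pos rfl]

lemma sallyNF_n (he : 0 < e) (hmn : m < n) :
    sallyNF e m n x (2 * e + n) = x (sallyP m n) * x (n - sallyP m n) := by
  rw [sallyNF, dif_neg (by omega), if_neg (by omega), if_pos rfl]

lemma sallyNF_step (he : 0 < e) {w : ℕ} (hw : 2 * e ≤ w) (h1 : w ≠ 2 * e + m)
    (h2 : w ≠ 2 * e + n) : sallyNF e m n x w = x 0 * sallyNF e m n x (w - e) := by
  rw [sallyNF, dif_neg (by omega), if_neg h1, if_neg h2]

lemma sallyNF_add (he : 0 < e) {w : ℕ} (hw : sallyS e m n w) :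
    sallyNF e m n x (w + e) = x 0 * sallyNF e m n x w := by
  rcases hw with rfl | ⟨h, h1, h2⟩
  · have := sallyNF_lt (m := m) (n := n) x he
    rw [sallyNF_zero, mul_one, ← this]
    congr 1
    omega
  · rw [sallyNF_step x he (by omega) (by omega) (by omega)]
    congr 2
    omega

lemma map_sallyNF {Q' F : Type*} [CommRing Q'] [FunLike F Q Q'] [RingHomClass F Q Q'] (f : F)
    (w : ℕ) :
    f (sallyNF e m n x w) = sallyNF e m n (fun i => f (x i)) w := by
  induction w using Nat.strong_induction_on with
  | _ w ih =>
    rw [sallyNF.eq_def e m n x w, sallyNF.eq_def e m n (fun i => f (x i)) w]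
    split_ifs with h h1 h2 h3
    · simp
    · rfl
    · simp
    · simp
    · rw [map_mul, ih _ (by omega)]

/-- If the quadratic relations `x_a x_b = y (2e+a+b)` hold, then so do all the relations
`y w * x_c = y (w+e+c)`; the induction is on the weight, which drops by `e` each time a factor
`x_0` is split off. -/
lemma sallyNF_mul (hm : 3 ≤ m) (hmn : m < n) (hn : n ≤ e - 2) (h34 : ¬(m = 3 ∧ n = 4))
    (hrel : ∀ a b, sallyJ e m n a → sallyJ e m n b → 0 < a → 0 < b →
      x a * x b = sallyNF e m n x (2 * e + a + b))
    (w c : ℕ) (hw : sallyS e m n w) (hc : sallyJ e m n c) :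
    sallyNF e m n x w * x c = sallyNF e m n x (w + e + c) := by
  have he : 0 < e := by omega
  obtain ⟨T, hT⟩ : ∃ T, w + e + c = T := ⟨_, rfl⟩
  induction T using Nat.strong_induction_on generalizing w c with
  | _ T ih =>
  subst hT
  rcases Nat.eq_zero_or_pos c with rfl | hc0
  · rw [add_zero, sallyNF_add x he hw, mul_comm]
  -- A cubic with a pair of indices whose sum avoids `m` and `n` reduces by splitting off `x 0`.
  have key : ∀ a b d, sallyJ e m n a → sallyJ e m n b → sallyJ e m n d → 0 < a → 0 < b → 0 < d →
      b + d ≠ m → b + d ≠ n → 2 * e + a + b + d < w + e + c →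
      x b * x d * x a = sallyNF e m n x (3 * e + a + b + d) := by
    intro a b d ha hb hd ha0 hb0 hd0 h1 h2 hlt
    rw [hrel b d hb hd hb0 hd0, sallyNF_step x he (by omega) (by omega) (by omega), mul_assoc,
      ih _ hlt _ a (Or.inr (by omega)) ha (by omega),
      ← sallyNF_add x he (Or.inr (by omega))]
    congr 1
    omega
  by_cases hw2 : w < 2 * e
  · rcases hw with rfl | ⟨h, h1, h2⟩
    · rw [sallyNF_zero, one_mul, zero_add, sallyNF_lt x (by unfold sallyJ at hc; omega)]
    · obtain ⟨i, rfl⟩ := Nat.exists_eq_add_of_le h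
      rw [sallyNF_lt x (by omega)]
      rcases Nat.eq_zero_or_pos i with rfl | hi0
      · have : e + 0 + e + c = (e + c) + e := by omega
        rw [this, sallyNF_add x he (Or.inr (by unfold sallyJ at hc; omega)),
          sallyNF_lt x (by unfold sallyJ at hc; omega)]
      · rw [hrel i c ⟨by omega, by omega, by omega⟩ hc hi0 hc0]
        congr 1
        omega
  · have hJ1 : sallyJ e m n 1 := by unfold sallyJ; omega
    unfold sallyJ at hc
    by_cases hwm : w = 2 * e + m
    · subst hwm
      rw [sallyNF_m x he]
      have hJm : sallyJ e m n (m - 1) := by unfold sallyJ; omega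
      by_cases h1 : 1 + c ≠ m ∧ 1 + c ≠ n
      · have := key (m - 1) 1 c hJm hJ1 hc (by omega) (by omega) hc0 h1.1 h1.2 (by omega)
        rw [mul_right_comm, this]
        congr 1
        omega
      by_cases h2 : m - 1 + c ≠ m ∧ m - 1 + c ≠ n
      · have := key 1 (m - 1) c hJ1 hJm hc (by omega) (by omega) hc0 h2.1 h2.2 (by omega)
        rw [mul_comm (x 1), mul_right_comm, this]
        congr 1
        omega
      -- Here `c = m - 1` and `n = 2m - 2`; rewrite `x_{m-1}^2` as `x_1 x_{2m-3}`.
      have hcm : c = m - 1 := by omega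
      have hnm : n = 2 * m - 2 := by omega
      have hJ3 : sallyJ e m n (2 * m - 3) := by unfold sallyJ; omega
      have e1 : x (m - 1) * x (m - 1) = x 1 * x (2 * m - 3) := by
        rw [hrel _ _ hJm hJm (by omega) (by omega), hrel _ _ hJ1 hJ3 (by omega) (by omega)]
        congr 1
        omega
      have := key (2 * m - 3) 1 1 hJ3 hJ1 hJ1 (by omega) (by omega) (by omega) (by omega)
        (by omega) (by omega)
      rw [hcm, mul_assoc, e1, ← mul_assoc, this]
      congr 1
      omega
    by_cases hwn : w = 2 * e + n
    · subst hwn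
      rw [sallyNF_n x he hmn]
      by_cases hp : n = m + 1
      · have hP : sallyP m n = 2 := if_pos hp
        rw [hP]
        have hJ2 : sallyJ e m n 2 := by unfold sallyJ; omega
        have hJn : sallyJ e m n (n - 2) := by unfold sallyJ; omega
        by_cases h1 : n - 2 + c ≠ m ∧ n - 2 + c ≠ n
        · have := key 2 (n - 2) c hJ2 hJn hc (by omega) (by omega) hc0 h1.1 h1.2 (by omega)
          rw [mul_comm (x 2), mul_right_comm, this]
          congr 1
          omega
        by_cases h2 : 2 + c ≠ m ∧ 2 + c ≠ n
        · have := key (n - 2) 2 c hJn hJ2 hc (by omega) (by omega) hc0 h2.1 h2.2 (by omega)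
          rw [mul_right_comm, this]
          congr 1
          omega
        -- Only `(m, n) = (4, 5)`, `c = 2` remains: `x_2 x_3 x_2 = x_1 x_3 x_3`.
        have hc2 : c = 2 := by omega
        have hn5 : n = 5 := by omega
        have hm4 : m = 4 := by omega
        subst hc2 hn5 hm4
        have e1 : x 2 * x 2 = x 1 * x 3 := by
          rw [hrel _ _ hJ2 hJ2 (by omega) (by omega), hrel _ _ hJ1 hJn (by omega) (by omega)]
        have := key 1 3 3 hJ1 hJn hJn (by omega) (by omega) (by omega) (by omega)
          (by omega) (by omega)
        rw [mul_right_comm, e1, mul_assoc, mul_comm, this]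
        congr 1
        omega
      · have hP : sallyP m n = 1 := if_neg hp
        rw [hP]
        have hJn : sallyJ e m n (n - 1) := by unfold sallyJ; omega
        by_cases h1 : n - 1 + c ≠ m ∧ n - 1 + c ≠ n
        · have := key 1 (n - 1) c hJ1 hJn hc (by omega) (by omega) hc0 h1.1 h1.2 (by omega)
          rw [mul_comm (x 1), mul_right_comm, this]
          congr 1
          omega
        have := key (n - 1) 1 c hJn hJ1 hc (by omega) (by omega) hc0 (by omega) (by omega)
          (by omega)
        rw [mul_right_comm, this]
        congr 1
        omega
    · rcases hw with rfl | ⟨h, h1, h2⟩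
      · omega
      rw [sallyNF_step x he (by omega) hwm hwn, mul_assoc,
        ih _ (by omega) (w - e) c (Or.inr (by omega)) hc rfl,
        ← sallyNF_add x he (Or.inr (by omega))]
      congr 1
      omega

/-- Under the grading the normal form of weight `w` maps to `t^w`. -/
lemma sallyNF_eq_pow (hm : 3 ≤ m) (hmn : m < n) (hn : n ≤ e - 2) (h34 : ¬(m = 3 ∧ n = 4)) (t : Q)
    (hx : ∀ i, sallyJ e m n i → x i = t ^ (e + i)) (w : ℕ) (hw : sallyS e m n w) :
    sallyNF e m n x w = t ^ w := by
  have he : 0 < e := by omega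
  have hJ : ∀ i, sallyJ e m n i ↔ i ≤ e - 1 ∧ i ≠ m ∧ i ≠ n := fun i => Iff.rfl
  induction w using Nat.strong_induction_on with
  | _ w ih =>
  rcases hw with rfl | ⟨h, h1, h2⟩
  · simp [sallyNF_zero]
  by_cases hw2 : w < 2 * e
  · obtain ⟨i, rfl⟩ := Nat.exists_eq_add_of_le h
    rw [sallyNF_lt x (by omega), hx i (by rw [hJ]; omega)]
  by_cases hwm : w = 2 * e + m
  · subst hwm
    rw [sallyNF_m x he, hx 1 (by rw [hJ]; omega), hx (m - 1) (by rw [hJ]; omega), ← pow_add]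
    congr 1
    omega
  by_cases hwn : w = 2 * e + n
  · subst hwn
    have hP : sallyP m n = 2 ∧ n = m + 1 ∨ sallyP m n = 1 ∧ n ≠ m + 1 := by
      unfold sallyP; split_ifs <;> simp [*]
    rw [sallyNF_n x he hmn, hx _ (by rw [hJ]; omega), hx (n - _) (by rw [hJ]; omega), ← pow_add]
    congr 1
    omega
  rw [sallyNF_step x he (by omega) hwm hwn, ih _ (by omega) (Or.inr (by omega)),
    hx 0 (by rw [hJ]; omega), ← pow_add]
  congr 1
  omega

/-- The normal form of weight at least `e` lies in any ideal containing all `x i`. -/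
lemma sallyNF_mem {M : Ideal Q} (he : 0 < e) (hx : ∀ i, x i ∈ M) (w : ℕ) (hw : e ≤ w) :
    sallyNF e m n x w ∈ M := by
  rw [sallyNF]
  split_ifs with h h1 h2 h3
  · omega
  · exact hx _
  · exact M.mul_mem_left _ (hx _)
  · exact M.mul_mem_left _ (hx _)
  · exact M.mul_mem_right _ (hx _)

/-- The normal form of weight at least `2e` has order at least two. -/
lemma sallyNF_mem_sq {M : Ideal Q} (he : 0 < e) (hx : ∀ i, x i ∈ M) (w : ℕ) (hw : 2 * e ≤ w) :
    sallyNF e m n x w ∈ M ^ 2 := by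
  rw [sq, sallyNF, dif_neg (by omega)]
  split_ifs with h2 h3
  · exact Ideal.mul_mem_mul (hx _) (hx _)
  · exact Ideal.mul_mem_mul (hx _) (hx _)
  · exact Ideal.mul_mem_mul (hx _) (sallyNF_mem x he hx _ (by omega))

end NF

/-! ### The binomial generators -/

open Classical in
/-- The variables of the polynomial ring, indexed by all of `ℕ` with `0` outside of `J`. -/
noncomputable def sallyX (e m n : ℕ) (k : Type*) [Field k] (i : ℕ) :
    MvPolynomial (sallyIndex e m n) k :=
  if h : i ≤ e - 1 ∧ i ≠ m ∧ i ≠ n then MvPolynomial.X ⟨i, h⟩ else 0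

lemma sallyX_of_mem {e m n : ℕ} (k : Type*) [Field k] {i : ℕ} (hi : sallyJ e m n i) :
    sallyX e m n k i = MvPolynomial.X (⟨i, hi⟩ : sallyIndex e m n) := dif_pos hi

lemma sallyX_of_not_mem {e m n : ℕ} (k : Type*) [Field k] {i : ℕ} (hi : ¬ sallyJ e m n i) :
    sallyX e m n k i = 0 := dif_neg hi

lemma sallyX_val (e m n : ℕ) (k : Type*) [Field k] (i : sallyIndex e m n) :
    sallyX e m n k i.1 = MvPolynomial.X i := sallyX_of_mem k i.2

/-- The binomial `x_a x_b - y (2e+a+b)` attached to an unordered pair of indices. -/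
noncomputable def sallyG (e m n : ℕ) (k : Type*) [Field k] :
    Sym2 ℕ → MvPolynomial (sallyIndex e m n) k :=
  Sym2.lift ⟨fun a b => sallyX e m n k a * sallyX e m n k b -
    sallyNF e m n (sallyX e m n k) (2 * e + a + b), fun a b => by
      beta_reduce
      rw [mul_comm (sallyX e m n k a), add_right_comm]⟩

lemma sallyG_mk (e m n : ℕ) (k : Type*) [Field k] (a b : ℕ) :
    sallyG e m n k s(a, b) = sallyX e m n k a * sallyX e m n k b -
      sallyNF e m n (sallyX e m n k) (2 * e + a + b) := rfl

/-- The nonzero indices `J \ {0}`. -/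
def sallyJpos (e m n : ℕ) : Finset ℕ := (((Finset.range e).erase 0).erase m).erase n

lemma mem_sallyJpos {e m n i : ℕ} (he : 0 < e) :
    i ∈ sallyJpos e m n ↔ sallyJ e m n i ∧ 0 < i := by
  simp only [sallyJpos, Finset.mem_erase, Finset.mem_range, sallyJ]
  omega

/-- The unordered pairs in `J \ {0}` other than `{1, m-1}` and `{p, n-p}`. -/
def sallyPairs (e m n : ℕ) : Finset (Sym2 ℕ) :=
  (((sallyJpos e m n).sym2).erase s(1, m - 1)).erase s(sallyP m n, n - sallyP m n)

lemma card_sallyPairs {e m n : ℕ} (hm : 3 ≤ m) (hmn : m < n) (hn : n ≤ e - 2)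
    (h34 : ¬(m = 3 ∧ n = 4)) : (sallyPairs e m n).card = (e - 2).choose 2 - 2 := by
  have hP : sallyP m n = 2 ∧ n = m + 1 ∨ sallyP m n = 1 ∧ n ≠ m + 1 := by
    unfold sallyP; split_ifs <;> simp [*]
  have hc : (sallyJpos e m n).card = e - 3 := by
    rw [sallyJpos, Finset.card_erase_of_mem, Finset.card_erase_of_mem, Finset.card_erase_of_mem,
      Finset.card_range]
    · omega
    all_goals simp only [Finset.mem_erase, Finset.mem_range]; omega
  rw [sallyPairs, Finset.card_erase_of_mem, Finset.card_erase_of_mem, Finset.card_sym2, hc]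
  · have : e - 3 + 1 = e - 2 := by omega
    rw [this]
    omega
  · simp only [Finset.mk_mem_sym2_iff, mem_sallyJpos (show 0 < e by omega), sallyJ]
    omega
  · simp only [Finset.mem_erase, Finset.mk_mem_sym2_iff, mem_sallyJpos (show 0 < e by omega),
      sallyJ, ne_eq, Sym2.eq_iff]
    omega

/-- For the two excluded pairs the binomial vanishes. -/
lemma sallyG_eq_zero {e m n : ℕ} (k : Type*) [Field k] (hm : 3 ≤ m) (hmn : m < n) (hn : n ≤ e - 2)
    (s : Sym2 ℕ) (hs : s = s(1, m - 1) ∨ s = s(sallyP m n, n - sallyP m n)) :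
    sallyG e m n k s = 0 := by
  have hP : sallyP m n = 2 ∨ sallyP m n = 1 := by unfold sallyP; split_ifs <;> simp
  rcases hs with rfl | rfl
  · have : 2 * e + 1 + (m - 1) = 2 * e + m := by omega
    rw [sallyG_mk, this, sallyNF_m _ (by omega), sub_self]
  · have : 2 * e + sallyP m n + (n - sallyP m n) = 2 * e + n := by omega
    rw [sallyG_mk, this, sallyNF_n _ (by omega) hmn, sub_self]

/-! ### The binomials generate the ideal -/

/-- If all the quadratic relations hold modulo an ideal `A`, then `A` contains the defining ideal:
modulo `A` a polynomial is the image of its value in `k[t]` under the linear map `t^w ↦ y w`. -/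
lemma ker_le_of_relations {e m n : ℕ} (k : Type*) [Field k]
    (hm : 3 ≤ m) (hmn : m < n) (hn : n ≤ e - 2) (h34 : ¬(m = 3 ∧ n = 4))
    (A : Ideal (MvPolynomial (sallyIndex e m n) k))
    (hA : ∀ a b, sallyJ e m n a → sallyJ e m n b → 0 < a → 0 < b → sallyG e m n k s(a, b) ∈ A) :
    sallyIdeal e m n k ≤ A := by
  set π := Ideal.Quotient.mkₐ k A with hπ
  set x : ℕ → MvPolynomial (sallyIndex e m n) k ⧸ A := fun i => π (sallyX e m n k i) with hx
  set φ := (MvPolynomial.aeval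
    (fun i : sallyIndex e m n => (Polynomial.X : Polynomial k) ^ (e + i.1)) :
      MvPolynomial (sallyIndex e m n) k →ₐ[k] Polynomial k) with hφ
  have hrel : ∀ a b, sallyJ e m n a → sallyJ e m n b → 0 < a → 0 < b →
      x a * x b = sallyNF e m n x (2 * e + a + b) := by
    intro a b ha hb ha0 hb0
    have h := Ideal.Quotient.eq_zero_iff_mem.2 (hA a b ha hb ha0 hb0)
    rw [sallyG_mk, map_sub, map_mul, sub_eq_zero, map_sallyNF] at h
    exact h
  let L : Polynomial k →ₗ[k] (MvPolynomial (sallyIndex e m n) k ⧸ A) :=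
    (Polynomial.basisMonomials k).constr k (fun w => sallyNF e m n x w)
  have hL : ∀ w c, L (Polynomial.monomial w c) = c • sallyNF e m n x w := by
    intro w c
    have h := (Polynomial.basisMonomials k).constr_basis k (fun w => sallyNF e m n x w) w
    rw [Polynomial.coe_basisMonomials] at h
    rw [← mul_one c, ← smul_eq_mul, ← Polynomial.smul_monomial, map_smul, h, smul_eq_mul, mul_one]
  have hmon : ∀ s c, ∃ w c', sallyS e m n w ∧
      φ (MvPolynomial.monomial s c) = Polynomial.monomial w c' ∧
      π (MvPolynomial.monomial s c) = c' • sallyNF e m n x w := by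
    refine MvPolynomial.induction_on_monomial ?_ ?_
    · intro c
      refine ⟨0, c, Or.inl rfl, ?_, ?_⟩
      · simp [hφ, Polynomial.algebraMap_eq]
      · rw [sallyNF_zero, ← MvPolynomial.algebraMap_eq, AlgHom.commutes, Algebra.algebraMap_eq_smul_one]
    · rintro p i ⟨w, c, hw, h1, h2⟩
      refine ⟨w + e + i.1, c, ?_, ?_, ?_⟩
      · have := i.2
        unfold sallyS at hw ⊢
        omega
      · rw [map_mul, h1, hφ, MvPolynomial.aeval_X, Polynomial.monomial_mul_X_pow, add_assoc]
      · rw [map_mul, h2, ← sallyX_val, smul_mul_assoc]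
        congr 1
        exact sallyNF_mul x hm hmn hn h34 hrel w i.1 hw i.2
  have hall : ∀ f, π f = L (φ f) := by
    intro f
    induction f using MvPolynomial.induction_on' with
    | monomial s c =>
      obtain ⟨w, c', -, h1, h2⟩ := hmon s c
      rw [h1, h2, hL]
    | add p q hp hq => simp only [map_add, hp, hq]
  intro f hf
  have hf0 : φ f = 0 := hf
  apply Ideal.Quotient.eq_zero_iff_mem.1
  change π f = 0
  rw [hall, hf0, map_zero]

lemma sallyG_mem {e m n : ℕ} (k : Type*) [Field k]
    (hm : 3 ≤ m) (hmn : m < n) (hn : n ≤ e - 2) (h34 : ¬(m = 3 ∧ n = 4)) (a b : ℕ)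
    (ha : sallyJ e m n a) (hb : sallyJ e m n b) : sallyG e m n k s(a, b) ∈ sallyIdeal e m n k := by
  rw [sallyIdeal, RingHom.mem_ker, sallyG_mk, map_sub, map_mul]
  have hx : ∀ i, sallyJ e m n i → (MvPolynomial.aeval
      (fun i : sallyIndex e m n => (Polynomial.X : Polynomial k) ^ (e + i.1)))
      (sallyX e m n k i) = (Polynomial.X : Polynomial k) ^ (e + i) := by
    intro i hi
    rw [sallyX_of_mem k hi]
    exact MvPolynomial.aeval_X _ _
  have h := map_sallyNF (e := e) (m := m) (n := n) (sallyX e m n k) (MvPolynomial.aeval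
      (fun i : sallyIndex e m n => (Polynomial.X : Polynomial k) ^ (e + i.1)) :
      MvPolynomial (sallyIndex e m n) k →ₐ[k] Polynomial k) (2 * e + a + b)
  rw [h, sallyNF_eq_pow _ hm hmn hn h34 Polynomial.X hx _ (Or.inr (by omega)), hx a ha, hx b hb,
    ← pow_add, sub_eq_zero]
  congr 1
  omega

lemma span_sallyG {e m n : ℕ} (k : Type*) [Field k]
    (hm : 3 ≤ m) (hmn : m < n) (hn : n ≤ e - 2) (h34 : ¬(m = 3 ∧ n = 4)) :
    Ideal.span (sallyG e m n k '' (sallyPairs e m n)) = sallyIdeal e m n k := by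
  apply le_antisymm
  · rw [Ideal.span_le]
    rintro _ ⟨s, hs, rfl⟩
    have hs' : s ∈ (sallyJpos e m n).sym2 :=
      Finset.mem_of_mem_erase (Finset.mem_of_mem_erase hs)
    induction s with
    | _ a b =>
    rw [Finset.mk_mem_sym2_iff, mem_sallyJpos (by omega), mem_sallyJpos (by omega)] at hs'
    exact sallyG_mem k hm hmn hn h34 a b hs'.1.1 hs'.2.1
  · apply ker_le_of_relations k hm hmn hn h34
    intro a b ha hb ha0 hb0
    by_cases h : s(a, b) = s(1, m - 1) ∨ s(a, b) = s(sallyP m n, n - sallyP m n)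
    · rw [sallyG_eq_zero k hm hmn hn _ h]
      exact Ideal.zero_mem _
    · push Not at h
      apply Ideal.subset_span
      refine ⟨_, ?_, rfl⟩
      rw [sallyPairs, Finset.mem_coe, Finset.mem_erase, Finset.mem_erase, Finset.mk_mem_sym2_iff,
        mem_sallyJpos (by omega), mem_sallyJpos (by omega)]
      exact ⟨h.2, h.1, ⟨ha, ha0⟩, hb, hb0⟩

/-! ### The lower bound -/

/-- A Nakayama-type bound: a `k`-linear map that is semilinear on the ideal along some `ε`, and
under which the ideal hits a standard basis, bounds the size of a generating set below. -/
lemma card_le_of_span_eq {k R Λ : Type*} [Field k] [CommRing R] [Algebra k R] [Fintype Λ]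
    [DecidableEq Λ] (I : Ideal R) (ψ : R →ₗ[k] (Λ → k)) (ε : R → k)
    (hψ : ∀ p, ∀ f ∈ I, ψ (p * f) = ε p • ψ f) (hb : ∀ l, ∃ f ∈ I, ψ f = Pi.single l 1)
    (F : Finset R) (hF : Ideal.span (F : Set R) = I) : Fintype.card Λ ≤ F.card := by
  classical
  subst hF
  have hW : ∀ f ∈ Ideal.span (F : Set R),
      ψ f ∈ Submodule.span k ((F.image ψ : Finset (Λ → k)) : Set (Λ → k)) := by
    intro f hf
    induction hf using Submodule.span_induction with
    | mem f hf => exact Submodule.subset_span (Finset.mem_coe.2 (Finset.mem_image_of_mem _ hf))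
    | zero => simp
    | add f g _ _ h1 h2 => rw [map_add]; exact Submodule.add_mem _ h1 h2
    | smul p f hf h => rw [smul_eq_mul, hψ p f hf]; exact Submodule.smul_mem _ _ h
  have htop : Submodule.span k ((F.image ψ : Finset (Λ → k)) : Set (Λ → k)) = ⊤ := by
    rw [eq_top_iff, ← (Pi.basisFun k Λ).span_eq, Submodule.span_le]
    rintro _ ⟨l, rfl⟩
    obtain ⟨f, hf, h⟩ := hb l
    rw [Pi.basisFun_apply, ← h]
    exact hW f hf
  have h1 := finrank_span_finset_le_card (R := k) (F.image ψ)
  rw [Set.finrank, htop, finrank_top, Module.finrank_fintype_fun_eq_card] at h1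
  exact h1.trans Finset.card_image_le

/-- On polynomials of order at least two, the coefficients at quadratic monomials are multiplied by
the constant coefficient of the factor. -/
lemma coeff_mul_of_degree_two {k σ : Type*} [Field k] (p f : MvPolynomial σ k)
    (hf : f ∈ MvPolynomial.idealOfVars σ k ^ 2) (d : σ →₀ ℕ) (hd : d.degree = 2) :
    (p * f).coeff d = p.coeff 0 * f.coeff d := by
  classical
  rw [MvPolynomial.mem_pow_idealOfVars_iff'] at hf
  rw [MvPolynomial.coeff_mul]
  refine Finset.sum_eq_single (0, d) ?_ ?_
  · rintro ⟨u, v⟩ huv hne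
    rw [Finset.HasAntidiagonal.mem_antidiagonal] at huv
    simp only at huv ⊢
    rw [hf v, mul_zero]
    by_contra hv
    have h := congrArg Finsupp.degree huv
    rw [map_add, hd] at h
    have hu : u.degree = 0 := by omega
    rw [Finsupp.degree_eq_zero_iff] at hu
    subst hu
    rw [zero_add] at huv
    exact hne (by rw [huv])
  · intro h
    simp at h

/-- The exponent vector of the monomial `x_a x_b`. -/
noncomputable def pairExp : Sym2 ℕ → (ℕ →₀ ℕ) :=
  Sym2.lift ⟨fun a b => Finsupp.single a 1 + Finsupp.single b 1, fun _ _ => add_comm _ _⟩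

lemma pairExp_mk (a b : ℕ) : pairExp s(a, b) = Finsupp.single a 1 + Finsupp.single b 1 := rfl

lemma pairExp_injective : Function.Injective pairExp := by
  intro s t h
  induction s with
  | _ a b =>
  induction t with
  | _ c d =>
  rw [pairExp_mk, pairExp_mk,
    Finsupp.single_add_single_eq_single_add_single one_ne_zero one_ne_zero] at h
  rw [Sym2.eq_iff]
  omega

/-- The variables `x_i` in `k[X_i : i ∈ ℕ]`, still with `0` outside of `J`. -/
noncomputable def sallyX' (e m n : ℕ) (k : Type*) [Field k] (i : ℕ) : MvPolynomial ℕ k :=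
  MvPolynomial.rename (fun i : sallyIndex e m n => i.1) (sallyX e m n k i)

lemma sallyX'_of_mem {e m n : ℕ} (k : Type*) [Field k] {i : ℕ} (hi : sallyJ e m n i) :
    sallyX' e m n k i = MvPolynomial.X i := by
  rw [sallyX', sallyX_of_mem k hi]
  exact MvPolynomial.rename_X _ _

lemma sallyX'_mem (e m n : ℕ) (k : Type*) [Field k] (i : ℕ) :
    sallyX' e m n k i ∈ MvPolynomial.idealOfVars ℕ k := by
  by_cases hi : sallyJ e m n i
  · rw [sallyX'_of_mem k hi]
    exact Ideal.subset_span ⟨i, rfl⟩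
  · rw [sallyX', sallyX_of_not_mem k hi, map_zero]
    exact Ideal.zero_mem _

lemma rename_sallyG (e m n : ℕ) (k : Type*) [Field k] (a b : ℕ) :
    MvPolynomial.rename (fun i : sallyIndex e m n => i.1) (sallyG e m n k s(a, b)) =
      sallyX' e m n k a * sallyX' e m n k b -
        sallyNF e m n (sallyX' e m n k) (2 * e + a + b) := by
  have h := map_sallyNF (e := e) (m := m) (n := n) (sallyX e m n k)
    (MvPolynomial.rename (R := k) (fun i : sallyIndex e m n => i.1)) (2 * e + a + b)
  rw [sallyG_mk, map_sub, map_mul, h]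
  rfl

/-- All elements of the defining ideal have order at least two. -/
lemma rename_mem_sq {e m n : ℕ} (k : Type*) [Field k]
    (hm : 3 ≤ m) (hmn : m < n) (hn : n ≤ e - 2) (h34 : ¬(m = 3 ∧ n = 4))
    (f : MvPolynomial (sallyIndex e m n) k) (hf : f ∈ sallyIdeal e m n k) :
    MvPolynomial.rename (fun i : sallyIndex e m n => i.1) f ∈
      MvPolynomial.idealOfVars ℕ k ^ 2 := by
  suffices h : sallyIdeal e m n k ≤ (MvPolynomial.idealOfVars ℕ k ^ 2).comap
      (MvPolynomial.rename (R := k) (fun i : sallyIndex e m n => i.1)) from h hf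
  apply ker_le_of_relations k hm hmn hn h34
  intro a b _ _ _ _
  rw [Ideal.mem_comap, rename_sallyG]
  refine Ideal.sub_mem _ ?_ (sallyNF_mem_sq _ (by omega) (sallyX'_mem e m n k) _ (by omega))
  rw [sq]
  exact Ideal.mul_mem_mul (sallyX'_mem e m n k a) (sallyX'_mem e m n k b)

/-- The coefficients of a generator at the quadratic monomials of the chosen pairs: the normal form
does not contribute, being either a monomial of an excluded pair or a multiple of `x_0`. -/
lemma coeff_rename_sallyG {e m n : ℕ} (k : Type*) [Field k]
    (hm : 3 ≤ m) (hmn : m < n) (hn : n ≤ e - 2) (h34 : ¬(m = 3 ∧ n = 4))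
    (s t : Sym2 ℕ) (hs : s ∈ sallyPairs e m n) (ht : t ∈ sallyPairs e m n) :
    (MvPolynomial.rename (fun i : sallyIndex e m n => i.1) (sallyG e m n k s)).coeff (pairExp t) =
      if s = t then 1 else 0 := by
  classical
  have he : 0 < e := by omega
  have hXX : ∀ a b, sallyJ e m n a → sallyJ e m n b →
      (sallyX' e m n k a * sallyX' e m n k b).coeff (pairExp t) =
        if s(a, b) = t then (1 : k) else 0 := by
    intro a b ha hb
    rw [sallyX'_of_mem k ha, sallyX'_of_mem k hb, MvPolynomial.X, MvPolynomial.X,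
      MvPolynomial.monomial_mul, MvPolynomial.coeff_monomial, ← pairExp_mk]
    simp [pairExp_injective.eq_iff]
  have hJ : ∀ i, sallyJ e m n i ↔ i ≤ e - 1 ∧ i ≠ m ∧ i ≠ n := fun i => Iff.rfl
  have hP : sallyP m n = 2 ∧ n = m + 1 ∨ sallyP m n = 1 ∧ n ≠ m + 1 := by
    unfold sallyP; split_ifs <;> simp [*]
  simp only [sallyPairs, Finset.mem_erase] at hs ht
  have hNF : ∀ w, 2 * e ≤ w →
      (sallyNF e m n (sallyX' e m n k) w).coeff (pairExp t) = 0 := by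
    intro w hw
    by_cases h1 : w = 2 * e + m
    · rw [h1, sallyNF_m _ he, hXX _ _ (by rw [hJ]; omega) (by rw [hJ]; omega),
        if_neg (Ne.symm ht.2.1)]
    by_cases h2 : w = 2 * e + n
    · rw [h2, sallyNF_n _ he hmn, hXX _ _ (by rw [hJ]; omega) (by rw [hJ]; omega),
        if_neg (Ne.symm ht.1)]
    rw [sallyNF_step _ he hw h1 h2, sallyX'_of_mem k (by rw [hJ]; omega),
      MvPolynomial.coeff_X_mul', if_neg]
    have ht' := ht.2.2
    induction t with
    | _ c d =>
    rw [Finset.mk_mem_sym2_iff, mem_sallyJpos he, mem_sallyJpos he] at ht'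
    have hc0 : c ≠ 0 := by omega
    have hd0 : d ≠ 0 := by omega
    simp [pairExp_mk, hc0, hd0]
  have hs' := hs.2.2
  clear hs
  induction s with
  | _ a b =>
  rw [Finset.mk_mem_sym2_iff, mem_sallyJpos he, mem_sallyJpos he] at hs'
  rw [rename_sallyG, MvPolynomial.coeff_sub, hNF _ (by omega), hXX _ _ hs'.1.1 hs'.2.1, sub_zero]

lemma card_generators_ge {e m n : ℕ} (k : Type*) [Field k]
    (hm : 3 ≤ m) (hmn : m < n) (hn : n ≤ e - 2) (h34 : ¬(m = 3 ∧ n = 4))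
    (F : Finset (MvPolynomial (sallyIndex e m n) k))
    (hF : Ideal.span (F : Set (MvPolynomial (sallyIndex e m n) k)) = sallyIdeal e m n k) :
    (sallyPairs e m n).card ≤ F.card := by
  let ρ : MvPolynomial (sallyIndex e m n) k →ₐ[k] MvPolynomial ℕ k :=
    MvPolynomial.rename (fun i : sallyIndex e m n => i.1)
  let ψ : MvPolynomial (sallyIndex e m n) k →ₗ[k] (sallyPairs e m n → k) :=
    LinearMap.pi fun t => (MvPolynomial.lcoeff k (pairExp t.1)).comp ρ.toLinearMap
  have hψ : ∀ f t, ψ f t = (ρ f).coeff (pairExp t.1) := fun _ _ => rfl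
  rw [← Fintype.card_coe]
  refine card_le_of_span_eq _ ψ (fun p => (ρ p).coeff 0) ?_ ?_ F hF
  · intro p f hf
    ext t
    rw [hψ, map_mul, coeff_mul_of_degree_two _ _ (rename_mem_sq k hm hmn hn h34 f hf)]
    · rfl
    · induction t.1 with
      | _ a b => simp [pairExp_mk]
  · rintro ⟨s, hs⟩
    refine ⟨sallyG e m n k s, ?_, ?_⟩
    · rw [← span_sallyG k hm hmn hn h34]
      exact Ideal.subset_span ⟨s, hs, rfl⟩
    · ext ⟨t, ht⟩
      rw [hψ, coeff_rename_sallyG k hm hmn hn h34 s t hs ht, Pi.single_apply]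
      simp [Subtype.ext_iff, eq_comm]

theorem stmt_12 (e m n : ℕ) (k : Type*) [Field k]
    (hm : 3 ≤ m) (hmn : m < n) (hn : n ≤ e - 2) (h34 : ¬(m = 3 ∧ n = 4)) :
    sallyMu e m n k = (e - 2).choose 2 - 2 := by
  classical
  rw [← card_sallyPairs hm hmn hn h34]
  have hspan : Ideal.span (((sallyPairs e m n).image (sallyG e m n k) : Finset _) :
      Set (MvPolynomial (sallyIndex e m n) k)) = sallyIdeal e m n k := by
    rw [Finset.coe_image, span_sallyG k hm hmn hn h34]
  apply le_antisymm
  · refine le_trans (Nat.sInf_le ?_) (Finset.card_image_le (f := sallyG e m n k))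
    exact ⟨_, rfl, hspan⟩
  · have hne : {c : ℕ | ∃ F : Finset (MvPolynomial (sallyIndex e m n) k), F.card = c ∧
        Ideal.span (F : Set (MvPolynomial (sallyIndex e m n) k)) =
          sallyIdeal e m n k}.Nonempty := ⟨_, _, rfl, hspan⟩
    obtain ⟨F, hc, hF⟩ := Nat.sInf_mem hne
    exact (card_generators_ge k hm hmn hn h34 F hF).trans_eq hc
end

section
/- Let e be a natural number with e ≥ 5, let (m, n) = (2, 3), and let k be a field. Then the minimal number of generators of the defining ideal I_{e,2,3} satisfies μ(I_{e,2,3}) = C(e−2, 2) − 1, where C(e−2, 2) denotes the binomial coefficient (e−2 choose 2). -/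
/-!
Compare `X^u` with the normal form of its `S`-degree: the monomial `X₀^a · w_r` where
`w_r = 1, X₁, X₁², X₁³` for `r = 0, 1, 2, 3` and `w_r = X_r` for `r ≥ 4`. (The monomials `w_r` have
as degrees the Apéry set of `S` with respect to `e`.) The generators are the binomials
`X_i X_j - (normal form)` for unordered pairs `{i, j}` of nonzero indices other than `{1, 1}`;
there are `(e - 2).choose 2 - 1` of them.

They generate the ideal: modulo their span `K`, every product of a variable and some `w_r` reduces
to a normal form (`good_step`), the one case which is not immediate being
`X₁⁴ ≡ X₁ X₄ X_{e-1} ≡ X₀³ X₄`. So every monomial is congruent to its normal form, which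
depends only on its image in `k[t]`; hence a linear section `sec` of the parametrisation satisfies
`f - sec (par f) ∈ K` for all `f`, and the kernel of `par` lies in `K` (`K_eq`).

No generating set is smaller: the ideal has no terms of degree at most one, so on it the
coefficients of the quadratic monomials `X_i X_j` are multiplied by `g(0)` when `f` is replaced by
`g f`. The vectors of these coefficients for any generating set thus span those of the whole ideal,
and the binomials above give a full standard basis because no normal form is one of the
leading monomials `X_i X_j` (`card_le`).
-/

namespace Sally

open MvPolynomial Finsupp

/-! ### Indices, degrees and normal forms -/

/-- The index set of the variables for `(m, n) = (2, 3)`. -/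
abbrev J (e : ℕ) : Type := sallyIndex e 2 3

noncomputable instance (e : ℕ) : DecidableEq (J e) := Classical.decEq _

noncomputable instance (e : ℕ) : Fintype (J e) :=
  Fintype.ofInjective (fun i : J e => (⟨i.1, by have := i.2.1; omega⟩ : Fin (e + 1)))
    (fun i j h => Subtype.ext (by simpa using h))

lemma card_J (e : ℕ) (he : 5 ≤ e) : Fintype.card (J e) = e - 2 := by
  have h : Fintype.card (J e) = (((Finset.range e).erase 2).erase 3).card := by
    rw [← Fintype.card_coe]
    refine Fintype.card_congr (Equiv.subtypeEquivRight fun i => ?_)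
    simp only [Finset.mem_erase, Finset.mem_range]
    omega
  rw [h, Finset.card_erase_of_mem, Finset.card_erase_of_mem, Finset.card_range]
  · omega
  · simp; omega
  · simp; omega

/-- The natural number `r` as an index, with the junk value `0` when `r ∉ J`. -/
noncomputable def idx (e r : ℕ) : J e :=
  if h : r ≤ e - 1 ∧ r ≠ 2 ∧ r ≠ 3 then ⟨r, h⟩ else ⟨0, by omega⟩

lemma idx_val {e r : ℕ} (h : r ≤ e - 1 ∧ r ≠ 2 ∧ r ≠ 3) : (idx e r).1 = r := by
  simp [idx, h]

lemma idx_self {e : ℕ} (i : J e) : idx e i.1 = i :=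
  Subtype.ext (idx_val i.2)

/-- The `S`-degree of an exponent vector: `X^u ↦ t^{wt u}`. -/
noncomputable def wt (e : ℕ) : (J e →₀ ℕ) →+ ℕ := Finsupp.weight fun i : J e => e + i.1

lemma wt_single {e : ℕ} (i : J e) (a : ℕ) : wt e (single i a) = a * (e + i.1) := by
  simp [wt, Finsupp.weight_apply]

/-- The number of variables occurring in the Apéry monomial of residue `r`. -/
def ht (r : ℕ) : ℕ := if r ≤ 3 then r else 1

/-- The exponent of the Apéry monomial of residue `r` modulo `e`:
`1, X₁, X₁², X₁³` for `r = 0, 1, 2, 3`, and `X_r` for `r ≥ 4`. -/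
noncomputable def ap (e r : ℕ) : J e →₀ ℕ :=
  single (idx e (if r ≤ 3 then 1 else r)) (ht r)

/-- The exponent of the normal form `X₀^a · (Apéry monomial)` of `S`-degree `s`.
For `s ∉ S` the truncated subtraction makes this a junk value. -/
noncomputable def nf (e s : ℕ) : J e →₀ ℕ :=
  single (idx e 0) (s / e - ht (s % e)) + ap e (s % e)

lemma wt_ap {e r : ℕ} (he : 5 ≤ e) (hr : r < e) : wt e (ap e r) = ht r * e + r := by
  unfold ap ht
  split_ifs with h
  · rw [wt_single, idx_val (by omega)]; ring
  · rw [wt_single, idx_val (by omega)]; ring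

lemma wt_zero_add {e : ℕ} (a : ℕ) (u : J e →₀ ℕ) :
    wt e (single (idx e 0) a + u) = a * e + wt e u := by
  rw [map_add, wt_single, idx_val (by omega)]; rfl

lemma nf_eq {e a r : ℕ} (hr : r < e) :
    nf e (a * e + (ht r * e + r)) = single (idx e 0) a + ap e r := by
  have h : a * e + (ht r * e + r) = r + (a + ht r) * e := by ring
  have h1 : (a * e + (ht r * e + r)) % e = r := by
    rw [h, Nat.add_mul_mod_self_right, Nat.mod_eq_of_lt hr]
  have h2 : (a * e + (ht r * e + r)) / e = a + ht r := by
    rw [h, Nat.add_mul_div_right _ _ (by omega), Nat.div_eq_of_lt hr, zero_add]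
  rw [nf, h1, h2, Nat.add_sub_cancel]

/-! ### The generators -/

/-- The exponent of the quadratic monomial attached to an unordered pair of indices. -/
noncomputable def mon {e : ℕ} (p : Sym2 (J e)) : J e →₀ ℕ :=
  Sym2.lift ⟨fun i j => single i 1 + single j 1, fun _ _ => add_comm _ _⟩ p

@[simp] lemma mon_mk {e : ℕ} (i j : J e) : mon s(i, j) = single i 1 + single j 1 := rfl

lemma mon_injective {e : ℕ} : Function.Injective (mon (e := e)) := by
  intro p q
  induction p with | _ a b => ?_
  induction q with | _ c d => ?_
  intro h
  rw [mon_mk, mon_mk, Finsupp.single_add_single_eq_single_add_single one_ne_zero one_ne_zero] at h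
  rw [Sym2.eq_iff]
  aesop

/-- The unordered pairs of nonzero indices, except `{1, 1}`. -/
noncomputable def pairs (e : ℕ) : Finset (Sym2 (J e)) :=
  ((Finset.univ.erase (idx e 0)).sym2).erase s(idx e 1, idx e 1)

lemma mem_pairs {e : ℕ} {i j : J e} (he : 5 ≤ e) :
    s(i, j) ∈ pairs e ↔ i.1 ≠ 0 ∧ j.1 ≠ 0 ∧ ¬ (i.1 = 1 ∧ j.1 = 1) := by
  have h0 : ∀ i : J e, i = idx e 0 ↔ i.1 = 0 := fun i =>
    ⟨fun h => by rw [h, idx_val (by omega)],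
      fun h => Subtype.ext (h.trans (idx_val (by omega)).symm)⟩
  have h1 : ∀ i : J e, i = idx e 1 ↔ i.1 = 1 := fun i =>
    ⟨fun h => by rw [h, idx_val (by omega)],
      fun h => Subtype.ext (h.trans (idx_val (by omega)).symm)⟩
  simp only [pairs, Finset.mem_erase, Finset.mk_mem_sym2_iff, Finset.mem_univ, ne_eq,
    Sym2.eq_iff, h0, h1]
  tauto

lemma card_pairs {e : ℕ} (he : 5 ≤ e) : (pairs e).card = (e - 2).choose 2 - 1 := by
  have h01 : idx e 1 ≠ idx e 0 := fun h => by
    have := congrArg Subtype.val h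
    rw [idx_val (by omega), idx_val (by omega)] at this
    omega
  rw [pairs, Finset.card_erase_of_mem (by simp [h01]), Finset.card_sym2,
    Finset.card_erase_of_mem (Finset.mem_univ _), Finset.card_univ, card_J e he]
  congr 2
  omega

section

variable (k : Type*) [Field k]

/-- The binomial `X_i X_j - (normal form of the same S-degree)`. -/
noncomputable def gen {e : ℕ} (p : Sym2 (J e)) : MvPolynomial (J e) k :=
  monomial (mon p) 1 - monomial (nf e (wt e (mon p))) 1

/-- The ideal generated by the binomials `gen k p`, `p ∈ pairs e`. -/
noncomputable def K (e : ℕ) : Ideal (MvPolynomial (J e) k) :=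
  Ideal.span (gen k '' (pairs e : Set (Sym2 (J e))))

/-- Congruence of monomials modulo `K`. -/
def Rel {e : ℕ} (u v : J e →₀ ℕ) : Prop :=
  (monomial u 1 - monomial v 1 : MvPolynomial (J e) k) ∈ K k e

/-- `X^u` is congruent modulo `K` to some `X₀^a · (Apéry monomial)` of the same `S`-degree. -/
def Good {e : ℕ} (u : J e →₀ ℕ) : Prop :=
  ∃ a r, r < e ∧ Rel k u (single (idx e 0) a + ap e r) ∧ wt e u = a * e + (ht r * e + r)

variable {k} {e : ℕ}

/-! ### Reduction of monomials to normal form -/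

lemma Rel.refl (u : J e →₀ ℕ) : Rel k u u := by simp [Rel]

lemma Rel.symm {u v : J e →₀ ℕ} (h : Rel k u v) : Rel k v u := by
  have := (K k e).neg_mem h
  rwa [neg_sub] at this

lemma Rel.trans {u v w : J e →₀ ℕ} (h : Rel k u v) (h' : Rel k v w) : Rel k u w := by
  have := (K k e).add_mem h h'
  rwa [sub_add_sub_cancel] at this

lemma Rel.add_left {u v : J e →₀ ℕ} (h : Rel k u v) (c : J e →₀ ℕ) :
    Rel k (c + u) (c + v) := by
  have := (K k e).mul_mem_left (monomial c 1) h
  rwa [mul_sub, monomial_mul, monomial_mul, one_mul] at this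

lemma Good.rel_nf {u : J e →₀ ℕ} (h : Good k u) : Rel k u (nf e (wt e u)) := by
  obtain ⟨a, r, hr, h, hw⟩ := h
  rwa [hw, nf_eq hr]

lemma Good.of_rel {u v : J e →₀ ℕ} (h : Good k v) (huv : Rel k u v) (hw : wt e u = wt e v) :
    Good k u := by
  obtain ⟨a, r, hr, h, hw'⟩ := h
  exact ⟨a, r, hr, huv.trans h, hw.trans hw'⟩

lemma good_ap (he : 5 ≤ e) {r : ℕ} (hr : r < e) : Good k (ap e r) :=
  ⟨0, r, hr, by simpa using Rel.refl _, by rw [wt_ap he hr]; ring⟩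

lemma Good.zero_add {u : J e →₀ ℕ} (h : Good k u) (a : ℕ) :
    Good k (single (idx e 0) a + u) := by
  obtain ⟨b, r, hr, h, hw⟩ := h
  refine ⟨a + b, r, hr, ?_, ?_⟩
  · have := h.add_left (single (idx e 0) a)
    rwa [← add_assoc, ← single_add] at this
  · rw [wt_zero_add, hw]; ring

/-- If `X^c · X^u` is to be reduced and `X^u` reduces to `X₀^a` times an Apéry monomial,
it suffices to reduce `X^c` times that Apéry monomial; the residue is `wt e u % e`. -/
lemma Good.add_left {u : J e →₀ ℕ} (he : 5 ≤ e) (h : Good k u) (c : J e →₀ ℕ)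
    (hc : ∀ r < e, r = wt e u % e → Good k (c + ap e r)) : Good k (c + u) := by
  obtain ⟨a, r, hr, h, hw⟩ := h
  have hmod : r = wt e u % e := by
    rw [hw, show a * e + (ht r * e + r) = r + (a + ht r) * e by ring,
      Nat.add_mul_mod_self_right, Nat.mod_eq_of_lt hr]
  refine ((hc r hr hmod).zero_add a).of_rel ?_ ?_
  · have := h.add_left c
    rwa [add_left_comm] at this
  · rw [map_add, hw, wt_zero_add, map_add, wt_ap he hr]; ring

lemma ap_zero : ap e 0 = 0 := by simp [ap, ht]

lemma ap_one_add {r : ℕ} (hr : r ≤ 2) : single (idx e 1) 1 + ap e r = ap e (r + 1) := by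
  have h3 : r ≤ 3 := by omega
  have h3' : r + 1 ≤ 3 := by omega
  simp only [ap, ht, h3, h3', if_true]
  rw [← single_add, add_comm]

lemma ap_val (i : J e) (hi : i.1 ≠ 0) : ap e i.1 = single i 1 := by
  have := i.2
  by_cases h : i.1 = 1
  · simp only [ap, ht, h]
    norm_num
    rw [← h, idx_self]
  · have h3 : ¬ i.1 ≤ 3 := by omega
    simp only [ap, ht, h3, if_false, idx_self]

lemma rel_gen {p : Sym2 (J e)} (hp : p ∈ pairs e) :
    Rel k (mon p) (nf e (wt e (mon p))) :=
  Ideal.subset_span ⟨p, hp, rfl⟩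

/-- A product of two variables other than `X₀` reduces: this is `X₁²` or the leading term of one
of the generators. -/
lemma good_pair (he : 5 ≤ e) (i j : J e) (hi : i.1 ≠ 0) (hj : j.1 ≠ 0) :
    Good k (single i 1 + single j 1) := by
  by_cases h : i.1 = 1 ∧ j.1 = 1
  · have h1 : i = idx e 1 := by rw [← h.1, idx_self]
    rw [← ap_val j hj, h1, h.2, ap_one_add (by omega)]
    exact good_ap he (by omega)
  · have hrel := rel_gen (k := k) ((mem_pairs he).2 ⟨hi, hj, h⟩)
    rw [mon_mk] at hrel
    have hi2 := i.2
    have hj2 := j.2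
    have hw : wt e (single i 1 + single j 1) = 2 * e + (i.1 + j.1) := by
      rw [map_add, wt_single, wt_single]; ring
    set s := wt e (single i 1 + single j 1) with hs
    have hr : s % e < e := Nat.mod_lt _ (by omega)
    refine ⟨s / e - ht (s % e), s % e, hr, hrel, ?_⟩
    have hdm : e * (s / e) + s % e = s := Nat.div_add_mod s e
    -- The residues 2 and 3 occur only with `i + j ≥ e`, where three factors `X₁` are available.
    have hle : ht (s % e) ≤ s / e := by
      by_cases hlt : i.1 + j.1 < e
      · have hm : s % e = i.1 + j.1 := by
          rw [hw, add_comm, Nat.add_mul_mod_self_right, Nat.mod_eq_of_lt hlt]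
        have hd : s / e = 2 := by
          rw [hw, add_comm, Nat.add_mul_div_right _ _ (by omega), Nat.div_eq_of_lt hlt]
        rw [hm, hd, ht]; split_ifs <;> omega
      · have hd : 3 ≤ s / e := by rw [Nat.le_div_iff_mul_le (by omega)]; omega
        rw [ht]; split_ifs <;> omega
    rw [← hs, ← add_assoc, ← add_mul, Nat.sub_add_cancel hle, mul_comm, hdm]

/-- The product of a variable and an Apéry monomial `w_r` with `r ≠ 2, 3`: both factors have degree
at most one. -/
lemma good_step_easy (he : 5 ≤ e) (i : J e) {r : ℕ} (hr : r < e) (h2 : r ≠ 2) (h3 : r ≠ 3) :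
    Good k (single i 1 + ap e r) := by
  by_cases hi : i.1 = 0
  · rw [← idx_self i, hi]
    exact (good_ap he hr).zero_add 1
  · by_cases hr0 : r = 0
    · rw [hr0, ap_zero, add_zero, ← ap_val i hi]
      have := i.2
      exact good_ap he (by omega)
    · have hv : (idx e r).1 = r := idx_val (by omega)
      have := ap_val (idx e r) (by omega)
      rw [hv] at this
      rw [this]
      exact good_pair he i _ hi (by omega)

lemma wt_pair (i j : J e) : wt e (single i 1 + single j 1) % e = (i.1 + j.1) % e := by
  rw [map_add, wt_single, wt_single,
    show 1 * (e + i.1) + 1 * (e + j.1) = (i.1 + j.1) + 2 * e by ring, Nat.add_mul_mod_self_right]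

/-- `X₁⁴ ≡ X₁ X₄ X_{e-1} ≡ X₀³ X₄`. -/
lemma good_one_three (he : 5 ≤ e) : Good k (single (idx e 1) 1 + ap e 3) := by
  have v1 : (idx e 1).1 = 1 := idx_val (by omega)
  have v4 : (idx e 4).1 = 4 := idx_val (by omega)
  have ve : (idx e (e - 1)).1 = e - 1 := idx_val (by omega)
  have hw : wt e (single (idx e 4) 1 + single (idx e (e - 1)) 1) = 0 * e + (ht 3 * e + 3) := by
    rw [map_add, wt_single, wt_single, v4, ve, ht]
    simp only [le_refl, if_true]
    omega
  have hrel := rel_gen (k := k) ((mem_pairs (i := idx e 4) (j := idx e (e - 1)) he).2 (by omega))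
  rw [mon_mk, hw, nf_eq (by omega), single_zero, zero_add] at hrel
  have hgood : Good k (single (idx e (e - 1)) 1 + (single (idx e 1) 1 + single (idx e 4) 1)) := by
    refine (good_pair he _ _ (by omega) (by omega)).add_left he _ fun r hr hmod => ?_
    rw [wt_pair, v1, v4] at hmod
    have : r = 0 ∨ r = 5 := by
      rcases Nat.lt_or_ge 5 e with h | h
      · right; rw [hmod, Nat.mod_eq_of_lt h]
      · left; obtain rfl : e = 5 := by omega
        exact hmod
    exact good_step_easy he _ hr (by omega) (by omega)
  refine hgood.of_rel ?_ ?_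
  · have := hrel.symm.add_left (single (idx e 1) 1)
    convert this using 1
    abel
  · rw [zero_mul, zero_add, ← wt_ap he (by omega : 3 < e)] at hw
    rw [map_add, ← hw, ← map_add]
    congr 1
    abel

/-- The product of a variable and an Apéry monomial reduces. -/
lemma good_step (he : 5 ≤ e) (i : J e) {r : ℕ} (hr : r < e) : Good k (single i 1 + ap e r) := by
  have hone : ∀ r < e, Good k (single (idx e 1) 1 + ap e r) := fun r hr => by
    by_cases h3 : r = 3
    · rw [h3]; exact good_one_three he
    by_cases h2 : r = 2
    · rw [h2, ap_one_add le_rfl]; exact good_ap he (by omega)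
    exact good_step_easy he _ hr h2 h3
  have htwo : Good k (single i 1 + ap e 2) := by
    rw [← ap_one_add (by omega : 1 ≤ 2), add_left_comm]
    exact (good_step_easy he i (by omega) (by omega) (by omega)).add_left he _
      fun r hr _ => hone r hr
  by_cases h2 : r = 2
  · rwa [h2]
  by_cases h3 : r = 3
  · rw [h3, ← ap_one_add le_rfl, add_left_comm]
    exact htwo.add_left he _ fun r hr _ => hone r hr
  exact good_step_easy he i hr h2 h3

lemma good_all (he : 5 ≤ e) (u : J e →₀ ℕ) : Good k u := by
  have hs : ∀ (i : J e) (n : ℕ) (u : J e →₀ ℕ), Good k u → Good k (single i n + u) := by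
    intro i n
    induction n with
    | zero => intro u hu; simpa using hu
    | succ n ih =>
      intro u hu
      rw [single_add, add_assoc]
      exact ih _ (hu.add_left he _ fun r hr _ => good_step he i hr)
  induction u using Finsupp.induction with
  | zero => rw [← ap_zero]; exact good_ap he (by omega)
  | single_add i n u _ _ ih => exact hs i n u ih

lemma wt_nf (he : 5 ≤ e) (u : J e →₀ ℕ) : wt e (nf e (wt e u)) = wt e u := by
  -- Only the statement about `S`-degrees is used, so any field will do.
  obtain ⟨a, r, hr, -, hw⟩ := good_all (k := ℚ) he u
  conv_rhs => rw [hw]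
  rw [hw, nf_eq hr, wt_zero_add, wt_ap he hr]

/-! ### The binomials generate the kernel -/

/-- The parametrisation `X_i ↦ t^{e+i}`. -/
noncomputable def par (k : Type*) [Field k] (e : ℕ) :
    MvPolynomial (J e) k →ₐ[k] Polynomial k :=
  aeval (fun i : J e => (Polynomial.X : Polynomial k) ^ (e + i.1))

lemma mem_sallyIdeal {f : MvPolynomial (J e) k} : f ∈ sallyIdeal e 2 3 k ↔ par k e f = 0 :=
  Iff.rfl

lemma par_monomial (u : J e →₀ ℕ) (c : k) :
    par k e (monomial u c) = Polynomial.monomial (wt e u) c := by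
  rw [par, aeval_monomial, ← Polynomial.C_mul_X_pow_eq_monomial, wt, Finsupp.weight_apply,
    Finsupp.sum, ← Finset.prod_pow_eq_pow_sum]
  simp only [Finsupp.prod, ← pow_mul, smul_eq_mul]
  congr 1
  exact Finset.prod_congr rfl fun i _ => by rw [mul_comm]

lemma K_le (he : 5 ≤ e) : K k e ≤ sallyIdeal e 2 3 k := by
  rw [K, Ideal.span_le]
  rintro _ ⟨p, -, rfl⟩
  show gen k p ∈ sallyIdeal e 2 3 k
  rw [mem_sallyIdeal, gen, map_sub, par_monomial, par_monomial, wt_nf he, sub_self]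

/-- The `k`-linear map sending `t^s` to the normal form of `S`-degree `s`; modulo `K` it is a left
inverse of the parametrisation. -/
noncomputable def sec (k : Type*) [Field k] (e : ℕ) :
    Polynomial k →ₗ[k] MvPolynomial (J e) k :=
  Polynomial.lsum fun s => monomial (nf e s)

lemma sub_sec_mem (he : 5 ≤ e) (f : MvPolynomial (J e) k) : f - sec k e (par k e f) ∈ K k e := by
  induction f using MvPolynomial.induction_on' with
  | monomial u c =>
    have h := (K k e).mul_mem_left (C c) (good_all (k := k) he u).rel_nf
    rw [mul_sub, C_mul_monomial, C_mul_monomial, mul_one] at h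
    rw [par_monomial]
    simpa [sec, Polynomial.lsum_apply, Polynomial.sum_monomial_index] using h
  | add p q hp hq =>
    rw [map_add, map_add, add_sub_add_comm]
    exact add_mem hp hq

lemma K_eq (he : 5 ≤ e) : K k e = sallyIdeal e 2 3 k := by
  refine le_antisymm (K_le he) fun f hf => ?_
  have := sub_sec_mem he f
  rwa [mem_sallyIdeal.1 hf, map_zero, sub_zero] at this

/-! ### The lower bound -/

lemma mul_degree_le_wt (u : J e →₀ ℕ) : e * u.degree ≤ wt e u := by
  induction u using Finsupp.induction with
  | zero => simp
  | single_add i n u _ _ ih =>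
    rw [map_add, map_add, wt_single, Finsupp.degree_single]
    nlinarith

/-- Two monomials of the same `S`-degree agree as soon as one of them has degree at most one:
the elements `e + i` form a minimal system of generators of `S`. -/
lemma eq_of_wt_eq (he : 5 ≤ e) {u v : J e →₀ ℕ} (hu : u.degree ≤ 1) (h : wt e v = wt e u) :
    v = u := by
  have key : ∀ u : J e →₀ ℕ, u.degree ≤ 1 → u = 0 ∨ ∃ i, u = single i 1 := fun u hu => by
    rcases Nat.le_one_iff_eq_zero_or_eq_one.1 hu with h | h
    · left; exact (Finsupp.degree_eq_zero_iff u).1 h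
    · right
      have hmem : u ∈ {d : J e →₀ ℕ | d.degree = 1} := h
      rw [← Finsupp.range_single_one] at hmem
      obtain ⟨i, hi⟩ := hmem
      exact ⟨i, hi.symm⟩
  have hv : v.degree ≤ 1 := by
    have h1 := mul_degree_le_wt v
    have h2 : wt e u < e * 2 := by
      rcases key u hu with rfl | ⟨i, rfl⟩
      · simp; omega
      · have := i.2; rw [wt_single]; omega
    by_contra hv
    have : e * 2 ≤ e * v.degree := Nat.mul_le_mul_left _ (by omega)
    omega
  rcases key u hu with rfl | ⟨i, rfl⟩ <;> rcases key v hv with rfl | ⟨j, rfl⟩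
  · rfl
  · rw [wt_single, map_zero] at h; omega
  · rw [wt_single, map_zero] at h; omega
  · rw [wt_single, wt_single] at h
    rw [show j = i from Subtype.ext (by omega)]

/-- The defining ideal has no terms of degree at most one. -/
lemma coeff_eq_zero (he : 5 ≤ e) {f : MvPolynomial (J e) k} (hf : f ∈ sallyIdeal e 2 3 k)
    {u : J e →₀ ℕ} (hu : u.degree ≤ 1) : coeff u f = 0 := by
  have hc : ∀ g : MvPolynomial (J e) k, (par k e g).coeff (wt e u) = coeff u g := fun g => by
    induction g using MvPolynomial.induction_on' with
    | monomial v c =>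
      rw [par_monomial, Polynomial.coeff_monomial, coeff_monomial]
      exact if_congr ⟨eq_of_wt_eq he hu, fun h => by rw [h]⟩ rfl rfl
    | add p q hp hq => rw [map_add, Polynomial.coeff_add, coeff_add, hp, hq]
  rw [← hc, mem_sallyIdeal.1 hf, Polynomial.coeff_zero]

lemma degree_mon (p : Sym2 (J e)) : (mon p).degree = 2 := by
  induction p with | _ i j => simp [Finsupp.degree_single]

/-- On the defining ideal the quadratic coefficients see only the constant term of a multiplier,
so they factor through `I / 𝔪 I`. -/
lemma coeff_mon_mul (he : 5 ≤ e) {f : MvPolynomial (J e) k} (hf : f ∈ sallyIdeal e 2 3 k)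
    (g : MvPolynomial (J e) k) (p : Sym2 (J e)) :
    coeff (mon p) (g * f) = coeff 0 g * coeff (mon p) f := by
  rw [coeff_mul, Finset.sum_eq_single (0, mon p)]
  · rintro ⟨x, y⟩ hxy hne
    rw [Finset.HasAntidiagonal.mem_antidiagonal] at hxy
    simp only at hxy ⊢
    rw [coeff_eq_zero he hf, mul_zero]
    have hd := congrArg Finsupp.degree hxy
    rw [map_add, degree_mon] at hd
    have hx : x.degree ≠ 0 := fun h => by
      rw [Finsupp.degree_eq_zero_iff] at h
      subst h
      rw [zero_add] at hxy
      exact hne (by rw [hxy])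
    omega
  · intro h
    exact absurd (by simp) h

/-- A normal form involves at most one variable besides `X₀`, and only `X₁` to a power greater
than one, so it is never the leading monomial of a generator. -/
lemma nf_ne_mon (he : 5 ≤ e) {p : Sym2 (J e)} (hp : p ∈ pairs e) (s : ℕ) : nf e s ≠ mon p := by
  induction p with | _ i j => ?_
  obtain ⟨hi, hj, hij⟩ := (mem_pairs he).1 hp
  intro h
  have hne0 : ∀ i : J e, i.1 ≠ 0 → idx e 0 ≠ i := fun i hi h => by
    rw [← h, idx_val (by omega)] at hi; exact hi rfl
  have h0 := hne0 i hi
  have h0' := hne0 j hj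
  rw [mon_mk, nf, ap] at h
  set c := idx e (if s % e ≤ 3 then 1 else s % e) with hc
  have ei := DFunLike.congr_fun h i
  have ej := DFunLike.congr_fun h j
  simp only [Finsupp.add_apply, Finsupp.single_apply, h0, h0', if_false, if_true] at ei ej
  have hci : c = i := by by_contra hh; simp only [hh, if_false] at ei; omega
  have hcj : c = j := by by_contra hh; simp only [hh, if_false] at ej; omega
  subst hci
  subst hcj
  simp only [if_true, ht] at ei
  have hs : s % e ≤ 3 := by by_contra hh; simp [hh] at ei
  have : c.1 = 1 := by rw [hc, if_pos hs, idx_val (by omega)]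
  exact hij ⟨this, this⟩

lemma coeff_gen (he : 5 ≤ e) {p q : Sym2 (J e)} (hp : p ∈ pairs e) :
    coeff (mon p) (gen k q) = if q = p then 1 else 0 := by
  rw [gen, coeff_sub, coeff_monomial, coeff_monomial, if_neg (nf_ne_mon he hp _), sub_zero]
  exact if_congr mon_injective.eq_iff rfl rfl

/-- Every generating set of the defining ideal has at least as many elements as there are
leading monomials. -/
lemma card_le (he : 5 ≤ e) (F : Finset (MvPolynomial (J e) k))
    (hF : Ideal.span (F : Set (MvPolynomial (J e) k)) = sallyIdeal e 2 3 k) :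
    (pairs e).card ≤ F.card := by
  classical
  let L : MvPolynomial (J e) k →ₗ[k] (pairs e → k) :=
    LinearMap.pi fun p => MvPolynomial.lcoeff k (mon p.1)
  have hL : ∀ f p, L f p = coeff (mon p.1) f := fun _ _ => rfl
  let W : Submodule k (pairs e → k) := Submodule.span k (F.image L : Set (pairs e → k))
  have hmem : ∀ f ∈ sallyIdeal e 2 3 k, L f ∈ W := by
    intro f hf
    rw [← hF] at hf
    induction hf using Submodule.span_induction with
    | mem x hx => exact Submodule.subset_span (by simpa using ⟨x, hx, rfl⟩)
    | zero => rw [map_zero]; exact zero_mem _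
    | add x y _ _ hx hy => rw [map_add]; exact add_mem hx hy
    | smul g x hx ih =>
      have : L (g • x) = coeff 0 g • L x := by
        ext p
        rw [Pi.smul_apply, hL, hL, smul_eq_mul, smul_eq_mul]
        exact coeff_mon_mul he (hF ▸ hx) g p.1
      rw [this]
      exact W.smul_mem _ ih
  have htop : W = ⊤ := by
    rw [eq_top_iff, ← (Pi.basisFun k (pairs e)).span_eq, Submodule.span_le]
    rintro _ ⟨q, rfl⟩
    have : (Pi.basisFun k (pairs e)) q = L (gen k q.1) := by
      ext p
      rw [hL, coeff_gen he p.2, Pi.basisFun_apply, Pi.single_apply]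
      exact if_congr ⟨fun h => by rw [h], fun h => (Subtype.ext h).symm⟩ rfl rfl
    rw [this]
    exact hmem _ (K_le he (Ideal.subset_span ⟨q.1, q.2, rfl⟩))
  have h1 : Module.finrank k W ≤ (F.image L).card := finrank_span_finset_le_card _
  rw [htop, finrank_top, Module.finrank_fintype_fun_eq_card, Fintype.card_coe] at h1
  exact h1.trans Finset.card_image_le

end

end Sally

open Sally in
theorem stmt_14 (e : ℕ) (k : Type*) [Field k] (he : 5 ≤ e) :
    sallyMu e 2 3 k = (e - 2).choose 2 - 1 := by
  classical
  rw [← card_pairs he]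
  have hmem : ((pairs e).image (gen k)).card ∈ {c : ℕ | ∃ F : Finset (MvPolynomial (J e) k),
      F.card = c ∧ Ideal.span (F : Set (MvPolynomial (J e) k)) = sallyIdeal e 2 3 k} :=
    ⟨_, rfl, by rw [Finset.coe_image]; exact K_eq he⟩
  refine le_antisymm ((Nat.sInf_le hmem).trans Finset.card_image_le) ?_
  refine le_csInf ⟨_, hmem⟩ ?_
  rintro _ ⟨F, rfl, hF⟩
  exact card_le he F hF
end

section
/- Let e, m, n be natural numbers with 2 ≤ m < n ≤ e − 2, and let k be a field. Then μ(I_{e,m,n}) ≤ C(e, 2), where C(e, 2) = (e choose 2) = C(wd(S_{e,m,n}) + 1, 2) for the width wd(S_{e,m,n}) = (2e − 1) − e = e − 1. In other words, Sally type numerical semigroups satisfy the Herzog–Stamate width bound μ(I_S) ≤ C(wd(S) + 1, 2). -/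
/-- The degree `∑ vᵢ (e + i)` of the image of `x ^ v` under `X_i ↦ t ^ (e + i)`. -/
noncomputable def sallyWt (e m n : ℕ) : (sallyIndex e m n →₀ ℕ) →+ ℕ :=
  Finsupp.weight (fun i : sallyIndex e m n => e + i.1)

lemma sallyWt_single {e m n : ℕ} (i : sallyIndex e m n) (a : ℕ) :
    sallyWt e m n (Finsupp.single i a) = a * (e + i.1) := by
  simp [sallyWt, Finsupp.weight_single]

lemma le_sallyWt {e m n : ℕ} {v : sallyIndex e m n →₀ ℕ} (hv : v ≠ 0) :
    e ≤ sallyWt e m n v := by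
  obtain ⟨i, hi⟩ := Finsupp.ne_iff.mp hv
  have h : Finsupp.single i 1 ≤ v := by
    rw [Finsupp.single_le_iff]
    exact Nat.one_le_iff_ne_zero.2 hi
  rw [← tsub_add_cancel_of_le h, map_add, sallyWt_single]
  omega

lemma aeval_monomial_sally {e m n : ℕ} {k : Type*} [Field k] (v : sallyIndex e m n →₀ ℕ) (c : k) :
    MvPolynomial.aeval (fun i : sallyIndex e m n => (Polynomial.X : Polynomial k) ^ (e + i.1))
      (MvPolynomial.monomial v c) = Polynomial.monomial (sallyWt e m n v) c := by
  rw [MvPolynomial.aeval_monomial, ← Polynomial.C_mul_X_pow_eq_monomial]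
  congr 1
  rw [sallyWt, Finsupp.weight_apply, Finsupp.sum, ← Finset.prod_pow_eq_pow_sum, Finsupp.prod]
  refine Finset.prod_congr rfl fun i _ => ?_
  rw [← pow_mul, smul_eq_mul, mul_comm]

/-- Choice of the exponent vectors of the Apéry set: `x` has least weight in the residue class `r`.
The last two clauses fix the choice for `r = 0` and for residues that are indices of variables. -/
lemma exists_apery {e m n : ℕ} (hm : 2 ≤ m) (hmn : m < n) (r : ℕ) (hr : r < e) :
    ∃ x : sallyIndex e m n →₀ ℕ, sallyWt e m n x % e = r ∧
      (∀ v, sallyWt e m n v % e = r → sallyWt e m n x ≤ sallyWt e m n v) ∧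
      (r = 0 → x = 0) ∧
      (r ≠ 0 → ∀ i : sallyIndex e m n, i.1 = r → x = Finsupp.single i 1) := by
  by_cases h0 : r = 0
  · subst h0
    exact ⟨0, by simp, by simp, by simp, by simp⟩
  by_cases hJ : ∃ i : sallyIndex e m n, i.1 = r
  · obtain ⟨i, rfl⟩ := hJ
    refine ⟨Finsupp.single i 1, ?_, ?_, by simp [h0], ?_⟩
    · rw [sallyWt_single, one_mul, Nat.add_mod_left, Nat.mod_eq_of_lt hr]
    · intro v hv
      have hv0 : v ≠ 0 := by
        rintro rfl
        simp only [map_zero, Nat.zero_mod] at hv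
        exact h0 hv.symm
      have h1 := le_sallyWt hv0
      rw [sallyWt_single, one_mul]
      have h2 := Nat.div_add_mod (sallyWt e m n v) e
      have h3 : 1 ≤ sallyWt e m n v / e := (Nat.one_le_div_iff (by omega)).2 h1
      have h4 : e * 1 ≤ e * (sallyWt e m n v / e) := Nat.mul_le_mul_left e h3
      omega
    · intro _ j hj
      rw [Subtype.ext hj]
  -- `X_1 ^ r` shows that the residue class is met.
  · have hex : ∃ d, ∃ v : sallyIndex e m n →₀ ℕ, sallyWt e m n v % e = r ∧ sallyWt e m n v = d := by
      let i : sallyIndex e m n := ⟨1, by omega, by omega, by omega⟩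
      have hi : i.1 = 1 := rfl
      refine ⟨_, Finsupp.single i r, ?_, rfl⟩
      rw [sallyWt_single, hi, Nat.mul_add, Nat.mul_add_mod_self_right, mul_one, Nat.mod_eq_of_lt hr]
    classical
    obtain ⟨x, hx, hxd⟩ := Nat.find_spec hex
    refine ⟨x, hx, fun v hv => ?_, fun h => absurd h h0, fun _ i hi => absurd ⟨i, hi⟩ hJ⟩
    rw [hxd]
    exact Nat.find_min' hex ⟨v, hv, rfl⟩

/-- The normal form of degree `d`: the vector `u (d % e)` of the Apéry set, plus the multiple of the
variable `z` (of weight `e`) that raises the degree to `d`. The truncated subtraction is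
harmless for `d` in the semigroup, and other `d` do not matter. -/
noncomputable def sallyNf {e m n : ℕ} (z : sallyIndex e m n) (u : ℕ → sallyIndex e m n →₀ ℕ)
    (d : ℕ) : sallyIndex e m n →₀ ℕ :=
  Finsupp.single z ((d - sallyWt e m n (u (d % e))) / e) + u (d % e)

section NormalForm

variable {e m n : ℕ} {z : sallyIndex e m n} {u : ℕ → sallyIndex e m n →₀ ℕ}

lemma sallyWt_nf (he : 0 < e) (hz : z.1 = 0) (hu : ∀ r < e, sallyWt e m n (u r) % e = r)
    (hmin : ∀ r < e, ∀ v, sallyWt e m n v % e = r → sallyWt e m n (u r) ≤ sallyWt e m n v)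
    (v : sallyIndex e m n →₀ ℕ) :
    sallyWt e m n (sallyNf z u (sallyWt e m n v)) = sallyWt e m n v := by
  have hr := Nat.mod_lt (sallyWt e m n v) he
  have h1 := hu _ hr
  have h2 := hmin _ hr v rfl
  rw [sallyNf, map_add, sallyWt_single, hz, add_zero,
    Nat.div_mul_cancel ((Nat.modEq_iff_dvd' h2).1 h1)]
  omega

lemma sallyNf_single_add (he : 0 < e) (hz : z.1 = 0)
    (hmin : ∀ r < e, ∀ v, sallyWt e m n v % e = r → sallyWt e m n (u r) ≤ sallyWt e m n v)
    (a : ℕ) (v : sallyIndex e m n →₀ ℕ) :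
    sallyNf z u (sallyWt e m n (Finsupp.single z a + v)) =
      Finsupp.single z a + sallyNf z u (sallyWt e m n v) := by
  have h2 := hmin _ (Nat.mod_lt (sallyWt e m n v) he) v rfl
  rw [sallyNf, sallyNf, map_add, sallyWt_single, hz, add_zero, Nat.mul_add_mod_self_right,
    Nat.add_sub_assoc h2, add_comm (a * e), Nat.add_mul_div_right _ _ he, ← add_assoc,
    ← Finsupp.single_add, add_comm a]

variable {k : Type*} [Field k]

/-- An ideal containing the binomials of all pairs of nonzero residues rewrites every monomial to
the normal form of its degree. -/
lemma monomial_sub_nf_mem (he : 0 < e) (hz : z.1 = 0)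
    (hu : ∀ r < e, sallyWt e m n (u r) % e = r)
    (hmin : ∀ r < e, ∀ v, sallyWt e m n v % e = r → sallyWt e m n (u r) ≤ sallyWt e m n v)
    (hu0 : u 0 = 0) (hui : ∀ i : sallyIndex e m n, i.1 ≠ 0 → u i.1 = Finsupp.single i 1)
    (K : Ideal (MvPolynomial (sallyIndex e m n) k))
    (hK : ∀ a b, a ≠ 0 → a < e → b ≠ 0 → b < e →
      MvPolynomial.monomial (u a + u b) (1 : k) -
        MvPolynomial.monomial (sallyNf z u (sallyWt e m n (u a + u b))) 1 ∈ K)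
    (v : sallyIndex e m n →₀ ℕ) :
    MvPolynomial.monomial v (1 : k) -
      MvPolynomial.monomial (sallyNf z u (sallyWt e m n v)) 1 ∈ K := by
  have shift : ∀ (x y w : sallyIndex e m n →₀ ℕ),
      MvPolynomial.monomial x (1 : k) - MvPolynomial.monomial y 1 ∈ K →
      MvPolynomial.monomial (w + x) (1 : k) - MvPolynomial.monomial (w + y) 1 ∈ K := by
    intro x y w h
    have := K.mul_mem_left (MvPolynomial.monomial w (1 : k)) h
    simpa [mul_sub, MvPolynomial.monomial_mul] using this
  -- Multiples of `z` split off, so they do not affect reducibility to the normal form.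
  have shiftz : ∀ (a : ℕ) (x : sallyIndex e m n →₀ ℕ),
      MvPolynomial.monomial x (1 : k) -
        MvPolynomial.monomial (sallyNf z u (sallyWt e m n x)) 1 ∈ K →
      MvPolynomial.monomial (Finsupp.single z a + x) (1 : k) -
        MvPolynomial.monomial (sallyNf z u (sallyWt e m n (Finsupp.single z a + x))) 1 ∈ K := by
    intro a x h
    rw [sallyNf_single_add he hz hmin]
    exact shift _ _ _ h
  have zero : MvPolynomial.monomial (0 : sallyIndex e m n →₀ ℕ) (1 : k) -
      MvPolynomial.monomial (sallyNf z u (sallyWt e m n 0)) 1 ∈ K := by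
    simp [sallyNf, hu0]
  -- One variable times an element of the Apéry set.
  have step : ∀ r < e, ∀ i : sallyIndex e m n,
      MvPolynomial.monomial (u r + Finsupp.single i 1) (1 : k) -
        MvPolynomial.monomial (sallyNf z u (sallyWt e m n (u r + Finsupp.single i 1))) 1 ∈ K := by
    intro r hr i
    have hie : i.1 < e := by have := i.2.1; omega
    have apery : ∀ s < e, MvPolynomial.monomial (u s) (1 : k) -
        MvPolynomial.monomial (sallyNf z u (sallyWt e m n (u s))) 1 ∈ K := by
      intro s hs
      rw [sallyNf, hu s hs]
      simp
    by_cases hi : i.1 = 0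
    · obtain rfl : i = z := Subtype.ext (hi.trans hz.symm)
      rw [add_comm]
      exact shiftz 1 _ (apery r hr)
    rw [← hui i hi]
    by_cases h0 : r = 0
    · rw [h0, hu0, zero_add]
      exact apery _ hie
    · exact hK r i.1 h0 hr hi hie
  have add_one : ∀ (v : sallyIndex e m n →₀ ℕ) (i : sallyIndex e m n),
      MvPolynomial.monomial v (1 : k) -
        MvPolynomial.monomial (sallyNf z u (sallyWt e m n v)) 1 ∈ K →
      MvPolynomial.monomial (v + Finsupp.single i 1) (1 : k) -
        MvPolynomial.monomial (sallyNf z u (sallyWt e m n (v + Finsupp.single i 1))) 1 ∈ K := by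
    intro v i hv
    have h1 := shift _ _ (Finsupp.single i 1) hv
    have h2 := shiftz ((sallyWt e m n v - sallyWt e m n (u (sallyWt e m n v % e))) / e) _
      (step _ (Nat.mod_lt (sallyWt e m n v) he) i)
    rw [← add_assoc, ← sallyNf, map_add, sallyWt_nf he hz hu hmin, ← map_add,
      add_comm _ (Finsupp.single i 1)] at h2
    rw [add_comm v]
    have h3 := K.add_mem h1 h2
    rwa [sub_add_sub_cancel, add_comm v] at h3
  have key : ∀ (i : sallyIndex e m n) (a : ℕ) (v : sallyIndex e m n →₀ ℕ),
      MvPolynomial.monomial v (1 : k) -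
        MvPolynomial.monomial (sallyNf z u (sallyWt e m n v)) 1 ∈ K →
      MvPolynomial.monomial (Finsupp.single i a + v) (1 : k) -
        MvPolynomial.monomial (sallyNf z u (sallyWt e m n (Finsupp.single i a + v))) 1 ∈ K := by
    intro i a v hv
    induction a with
    | zero => simpa using hv
    | succ a ih =>
      have := add_one _ i ih
      rwa [add_right_comm, ← Finsupp.single_add] at this
  induction v using Finsupp.induction with
  | zero => exact zero
  | single_add i a v _ _ ih => exact key i a v ih

end NormalForm

theorem stmt_16 (e m n : ℕ) (k : Type*) [Field k]
    (hm : 2 ≤ m) (hmn : m < n) (hn : n ≤ e - 2) :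
    sallyMu e m n k ≤ e.choose 2 := by
  classical
  have he : 0 < e := by omega
  let z : sallyIndex e m n := ⟨0, by omega, by omega, by omega⟩
  choose! u hu hmin hu0 hui using exists_apery (e := e) hm hmn
  let G : Sym2 ℕ → MvPolynomial (sallyIndex e m n) k := Sym2.lift
    ⟨fun a b => MvPolynomial.monomial (u a + u b) (1 : k) -
      MvPolynomial.monomial (sallyNf z u (sallyWt e m n (u a + u b))) 1,
      fun a b => by simp only [add_comm (u a)]⟩
  let F := (Finset.Icc 1 (e - 1)).sym2.image G
  have hcard : F.card ≤ e.choose 2 := by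
    refine Finset.card_image_le.trans ?_
    rw [Finset.card_sym2, Nat.card_Icc]
    have h : e - 1 + 1 - 1 + 1 = e := by omega
    rw [h]
  suffices hspan : Ideal.span (F : Set (MvPolynomial (sallyIndex e m n) k)) = sallyIdeal e m n k by
    rw [sallyMu]
    refine le_trans (Nat.sInf_le ?_) hcard
    exact ⟨F, rfl, hspan⟩
  apply le_antisymm
  · rw [Ideal.span_le]
    intro p hp
    obtain ⟨s, -, rfl⟩ := Finset.mem_image.1 (Finset.mem_coe.1 hp)
    induction s with
    | _ a b =>
    simp only [G, Sym2.lift_mk]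
    rw [SetLike.mem_coe, sallyIdeal, RingHom.mem_ker, map_sub]
    rw [aeval_monomial_sally, aeval_monomial_sally, sallyWt_nf he rfl hu hmin, sub_self]
  · intro f hf
    rw [sallyIdeal, RingHom.mem_ker] at hf
    let L : Polynomial k →ₗ[k] MvPolynomial (sallyIndex e m n) k :=
      (Polynomial.basisMonomials k).constr k fun d => MvPolynomial.monomial (sallyNf z u d) 1
    have hL : ∀ d c, L (Polynomial.monomial d c) = MvPolynomial.monomial (sallyNf z u d) c := by
      intro d c
      have h := (Polynomial.basisMonomials k).constr_basis k
        (fun d => (MvPolynomial.monomial (sallyNf z u d) 1 :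
          MvPolynomial (sallyIndex e m n) k)) d
      rw [Polynomial.coe_basisMonomials] at h
      rw [← mul_one c, ← smul_eq_mul, ← Polynomial.smul_monomial, map_smul, h,
        MvPolynomial.smul_monomial]
    have hmain : ∀ g : MvPolynomial (sallyIndex e m n) k,
        g - L (MvPolynomial.aeval
          (fun i : sallyIndex e m n => (Polynomial.X : Polynomial k) ^ (e + i.1)) g) ∈
            Ideal.span (F : Set (MvPolynomial (sallyIndex e m n) k)) := by
      intro g
      induction g using MvPolynomial.induction_on' with
      | monomial v c =>
        rw [aeval_monomial_sally, hL]
        have h := monomial_sub_nf_mem (k := k) (z := z) he rfl hu hmin (hu0 0 he rfl)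
          (fun i hi => hui i.1 (by have := i.2.1; omega) hi i rfl)
          (Ideal.span (F : Set (MvPolynomial (sallyIndex e m n) k)))
          (fun a b ha hae hb hbe => Ideal.subset_span (Finset.mem_coe.2 (Finset.mem_image.2
            ⟨s(a, b), by simp only [Finset.mk_mem_sym2_iff, Finset.mem_Icc]; omega, rfl⟩))) v
        have h' := Ideal.mul_mem_left _ (MvPolynomial.C c) h
        rwa [mul_sub, MvPolynomial.C_mul_monomial, MvPolynomial.C_mul_monomial, mul_one] at h'
      | add p q hp hq =>
        rw [map_add, map_add, add_sub_add_comm]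
        exact Ideal.add_mem _ hp hq
    have h := hmain f
    change MvPolynomial.aeval _ f = 0 at hf
    rwa [hf, map_zero, sub_zero] at h
end

section
/- Let e be a natural number with e ≥ 10, let (m, n) = (2, 3), and let k be a field. Then the defining ideal I_{e,2,3} is generated by the following binomials in k[X_i : i ∈ J], where J = {i ∈ ℕ : i ≤ e − 1, i ≠ 2, i ≠ 3}: (a) f_1(j,k) = X_{k+1}·X_j − X_k·X_{j+1} for all k < j with j, k ∈ {0, …, e−2} \ {1, 2, 3}; (b) f_2(j) = X_j·X_0² − X_{j+1}·X_{e−1} for all j ∈ {0, …, e−2} \ {1, 2, 3}; (c) f_3(j) = X_4·X_{j−4} − X_0·X_j for all j with 8 ≤ j ≤ e − 1; (d) the four binomials X_0²·X_1 − X_5·X_{e−4}, X_0·X_1² − X_5·X_{e−3}, X_4·X_{e−4} − X_1·X_{e−1}, and X_1³ − X_4·X_{e−1}. Moreover, this generating set has cardinality C(e−2, 2) − 1 = μ(I_{e,2,3}), so it is a minimal generating set. -/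
/-- The variable `X_i` of `k[X_i : i ∈ J]` for `J = {i ≤ e-1, i ≠ 2, i ≠ 3}`
(with junk value `0` for indices outside `J`; all indices occurring in the
generators below lie in `J`). -/
noncomputable def Xv (e : ℕ) (k : Type*) [Field k] (i : ℕ) :
    MvPolynomial (sallyIndex e 2 3) k :=
  if h : i ≤ e - 1 ∧ i ≠ 2 ∧ i ≠ 3 then MvPolynomial.X ⟨i, h⟩ else 0

/-- The asserted minimal generating set `𝓘_{e,2,3}` of the defining ideal `I_{e,2,3}`. -/
noncomputable def sallyGens (e : ℕ) (k : Type*) [Field k] :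
    Set (MvPolynomial (sallyIndex e 2 3) k) :=
  -- (a) f₁(j,l) = X_{l+1} X_j − X_l X_{j+1} for l < j, j, l ∈ {0,…,e−2} \ {1,2,3}
  {p | ∃ j l : ℕ, l < j ∧ j ≤ e - 2 ∧ l ≤ e - 2 ∧
      j ∉ ({1, 2, 3} : Set ℕ) ∧ l ∉ ({1, 2, 3} : Set ℕ) ∧
      p = Xv e k (l + 1) * Xv e k j - Xv e k l * Xv e k (j + 1)} ∪
  -- (b) f₂(j) = X_j X_0² − X_{j+1} X_{e−1} for j ∈ {0,…,e−2} \ {1,2,3}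
  {p | ∃ j : ℕ, j ≤ e - 2 ∧ j ∉ ({1, 2, 3} : Set ℕ) ∧
      p = Xv e k j * (Xv e k 0) ^ 2 - Xv e k (j + 1) * Xv e k (e - 1)} ∪
  -- (c) f₃(j) = X₄ X_{j−4} − X₀ X_j for 8 ≤ j ≤ e − 1
  {p | ∃ j : ℕ, 8 ≤ j ∧ j ≤ e - 1 ∧
      p = Xv e k 4 * Xv e k (j - 4) - Xv e k 0 * Xv e k j} ∪
  -- (d) the four sporadic binomials
  {(Xv e k 0) ^ 2 * Xv e k 1 - Xv e k 5 * Xv e k (e - 4),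
   Xv e k 0 * (Xv e k 1) ^ 2 - Xv e k 5 * Xv e k (e - 3),
   Xv e k 4 * Xv e k (e - 4) - Xv e k 1 * Xv e k (e - 1),
   (Xv e k 1) ^ 3 - Xv e k 4 * Xv e k (e - 1)}

/-! ### Normal forms in a ring satisfying the relations -/

/-- The relations that the asserted generators impose on elements `y i` of a commutative ring. -/
structure SallyRel (e : ℕ) {A : Type*} [CommRing A] (y : ℕ → A) : Prop where
  f1 : ∀ j l : ℕ, l < j → j ≤ e - 2 → l ≤ e - 2 → j ∉ ({1, 2, 3} : Set ℕ) →
    l ∉ ({1, 2, 3} : Set ℕ) → y (l + 1) * y j = y l * y (j + 1)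
  f2 : ∀ j : ℕ, j ≤ e - 2 → j ∉ ({1, 2, 3} : Set ℕ) →
    y j * y 0 ^ 2 = y (j + 1) * y (e - 1)
  f3 : ∀ j : ℕ, 8 ≤ j → j ≤ e - 1 → y 4 * y (j - 4) = y 0 * y j
  d1 : y 0 ^ 2 * y 1 = y 5 * y (e - 4)
  d2 : y 0 * y 1 ^ 2 = y 5 * y (e - 3)
  d3 : y 4 * y (e - 4) = y 1 * y (e - 1)
  d4 : y 1 ^ 3 = y 4 * y (e - 1)

/-- The factor `b_r` of a normal form that is free of `y 0`: the element of the Apéry set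
with residue `r` modulo `e`. -/
def nfBase {A : Type*} [CommRing A] (y : ℕ → A) (r : ℕ) : A :=
  if r ≤ 3 then y 1 ^ r else y r

/-- The degree of `nfBase y r` in the `y i`. -/
def nfDeg (r : ℕ) : ℕ := if r ≤ 3 then r else 1

/-- `p` is a normal form `y 0 ^ a * b_r` of weight `w`. -/
def IsNF (e : ℕ) {A : Type*} [CommRing A] (y : ℕ → A) (w : ℕ) (p : A) : Prop :=
  ∃ a r, r < e ∧ p = y 0 ^ a * nfBase y r ∧ w = e * (a + nfDeg r) + r

section NF

variable {e : ℕ} {A : Type*} [CommRing A] {y : ℕ → A}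

theorem IsNF.unique {w : ℕ} {p : A} (h : IsNF e y w p) :
    p = y 0 ^ (w / e - nfDeg (w % e)) * nfBase y (w % e) := by
  obtain ⟨a, r, hr, rfl, rfl⟩ := h
  have h1 : (e * (a + nfDeg r) + r) % e = r := by
    rw [Nat.mul_add_mod, Nat.mod_eq_of_lt hr]
  have h2 : (e * (a + nfDeg r) + r) / e = a + nfDeg r := by
    rw [Nat.mul_add_div (by omega), Nat.div_eq_of_lt hr, add_zero]
  rw [h1, h2, Nat.add_sub_cancel]

theorem IsNF.congr {w w' : ℕ} {p p' : A} (h : IsNF e y w p) (hw : w' = w) (hp : p' = p) :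
    IsNF e y w' p' := by subst hw hp; exact h

theorem IsNF.mul_y0_pow {w : ℕ} {p : A} (h : IsNF e y w p) (b : ℕ) :
    IsNF e y (w + e * b) (y 0 ^ b * p) := by
  obtain ⟨a, r, hr, rfl, rfl⟩ := h
  exact ⟨a + b, r, hr, by ring, by ring⟩

theorem isNF_one (he : 10 ≤ e) : IsNF e y 0 1 :=
  ⟨0, 0, by omega, by simp [nfBase], by simp [nfDeg]⟩

theorem isNF_y (i : ℕ) (hi : i < e) (h4 : 4 ≤ i) : IsNF e y (e + i) (y i) :=
  ⟨0, i, hi, by simp [nfBase, show ¬ i ≤ 3 by omega],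
    by simp [nfDeg, show ¬ i ≤ 3 by omega]⟩

theorem SallyRel.y1_mul_last (H : SallyRel e y) : y 1 * y (e - 1) = y 0 ^ 3 := by
  have := H.f2 0 (by omega) (by simp)
  rw [zero_add] at this
  rw [← this]; ring

theorem IsNF.mul_y1 (he : 10 ≤ e) (H : SallyRel e y) {w : ℕ} {p : A} (h : IsNF e y w p) :
    IsNF e y (w + (e + 1)) (y 1 * p) := by
  obtain ⟨a, r, hr, rfl, rfl⟩ := h
  rcases lt_trichotomy r 3 with h3 | rfl | h3
  · refine ⟨a, r + 1, by omega, ?_, ?_⟩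
    · rw [nfBase, nfBase, if_pos (by omega), if_pos (by omega)]; ring
    · rw [nfDeg, nfDeg, if_pos (by omega), if_pos (by omega)]; ring
  · refine ⟨a + 3, 4, by omega, ?_, ?_⟩
    · have h1 := H.d4
      have h2 := H.y1_mul_last
      rw [nfBase, nfBase, if_pos (by omega), if_neg (by omega)]
      linear_combination y 0 ^ a * y 1 * h1 + y 0 ^ a * y 4 * h2
    · rw [nfDeg, nfDeg, if_pos (by omega), if_neg (by omega)]; ring
  · rcases Nat.lt_or_ge r (e - 1) with h4 | h4
    · refine ⟨a + 1, r + 1, by omega, ?_, ?_⟩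
      · have h1 := H.f1 r 0 (by omega) (by omega) (by omega) (by simp; omega) (by simp)
        rw [zero_add] at h1
        rw [nfBase, nfBase, if_neg (by omega), if_neg (by omega)]
        linear_combination y 0 ^ a * h1
      · rw [nfDeg, nfDeg, if_neg (by omega), if_neg (by omega)]; ring
    · obtain rfl : r = e - 1 := by omega
      refine ⟨a + 3, 0, by omega, ?_, ?_⟩
      · have h2 := H.y1_mul_last
        rw [nfBase, nfBase, if_neg (by omega), if_pos (by omega)]
        linear_combination y 0 ^ a * h2
      · rw [nfDeg, nfDeg, if_neg (by omega), if_pos (by omega)]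
        obtain ⟨s, rfl⟩ : ∃ s, e = s + 1 := ⟨e - 1, by omega⟩
        simp only [Nat.add_sub_cancel]; ring

theorem IsNF.mul_y1_pow (he : 10 ≤ e) (H : SallyRel e y) {w : ℕ} {p : A} (h : IsNF e y w p)
    (b : ℕ) : IsNF e y (w + (e + 1) * b) (y 1 ^ b * p) := by
  induction b with
  | zero => exact h.congr (by ring) (by ring)
  | succ b ih => exact (ih.mul_y1 he H).congr (by ring) (by ring)

theorem SallyRel.shift (H : SallyRel e y) (t : ℕ) : ∀ i j : ℕ, 4 ≤ i → 4 ≤ j → i + t < e →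
    j + t < e → y (i + t) * y j = y i * y (j + t) := by
  induction t with
  | zero => intros; rfl
  | succ t ih =>
    intro i j hi hj hit hjt
    have hs : y (i + t + 1) * y j = y (i + t) * y (j + 1) := by
      rcases lt_trichotomy (i + t) j with h | h | h
      · exact H.f1 j (i + t) h (by omega) (by omega) (by simp; omega) (by simp; omega)
      · rw [h]; ring
      · have := H.f1 (i + t) j h (by omega) (by omega) (by simp; omega) (by simp; omega)
        linear_combination -this
    rw [← add_assoc, hs, ih i (j + 1) hi (by omega) (by omega) (by omega)]
    congr 2; ring

/-- Among the indices `≥ 4`, a product of two variables depends only on the index sum. -/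
theorem SallyRel.exchange (H : SallyRel e y) {i j i' j' : ℕ} (hi : 4 ≤ i) (hj : 4 ≤ j)
    (hi' : 4 ≤ i') (hj' : 4 ≤ j') (h1 : i < e) (h2 : j < e) (h3 : i' < e) (h4 : j' < e)
    (h : i + j = i' + j') : y i * y j = y i' * y j' := by
  rcases le_total i' i with h5 | h5
  · obtain ⟨t, rfl⟩ := Nat.exists_eq_add_of_le h5
    obtain rfl : j' = j + t := by omega
    exact H.shift t i' j hi' hj h1 h4
  · obtain ⟨t, rfl⟩ := Nat.exists_eq_add_of_le h5
    obtain rfl : j = j' + t := by omega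
    exact (H.shift t i j' hi hj' h3 h2).symm

theorem SallyRel.isNF_mul (he : 10 ≤ e) (H : SallyRel e y) {i j : ℕ} (hi : 4 ≤ i) (hj : 4 ≤ j)
    (h1 : i < e) (h2 : j < e) : IsNF e y (e + i + (e + j)) (y i * y j) := by
  rcases Nat.lt_or_ge (i + j) e with h | h
  · rw [H.exchange (i' := 4) (j' := i + j - 4) hi hj (by omega) (by omega) h1 h2 (by omega)
      (by omega) (by omega), H.f3 (i + j) (by omega) (by omega)]
    exact ((isNF_y (i + j) h (by omega)).mul_y0_pow 1).congr (by ring) (by ring)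
  obtain ⟨s, hs⟩ := Nat.exists_eq_add_of_le h
  have hw : e + i + (e + j) = e * 3 + s := by omega
  rw [hw]
  by_cases h0 : s = 0
  · subst h0
    rw [H.exchange (i' := 4) (j' := e - 4) hi hj (by omega) (by omega) h1 h2 (by omega)
      (by omega) (by omega), H.d3, H.y1_mul_last]
    exact ⟨3, 0, by omega, by simp [nfBase], by simp [nfDeg]⟩
  by_cases h0 : s = 1
  · subst h0
    rw [H.exchange (i' := 5) (j' := e - 4) hi hj (by omega) (by omega) h1 h2 (by omega)
      (by omega) (by omega), ← H.d1]
    exact ⟨2, 1, by omega, by simp [nfBase], by simp [nfDeg]⟩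
  by_cases h0 : s = 2
  · subst h0
    rw [H.exchange (i' := 5) (j' := e - 3) hi hj (by omega) (by omega) h1 h2 (by omega)
      (by omega) (by omega), ← H.d2]
    exact ⟨1, 2, by omega, by simp [nfBase], by simp [nfDeg]⟩
  by_cases h0 : s = 3
  · subst h0
    rw [H.exchange (i' := 4) (j' := e - 1) hi hj (by omega) (by omega) h1 h2 (by omega)
      (by omega) (by omega), ← H.d4]
    exact ⟨0, 3, by omega, by simp [nfBase], by simp [nfDeg]⟩
  rw [H.exchange (i' := s + 1) (j' := e - 1) hi hj (by omega) (by omega) h1 h2 (by omega)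
      (by omega) (by omega), ← H.f2 s (by omega) (by simp; omega)]
  exact ((isNF_y s (by omega) (by omega)).mul_y0_pow 2).congr (by ring) (by ring)

/-- Multiplying a normal form by a variable gives a normal form again. -/
theorem IsNF.mul_y (he : 10 ≤ e) (H : SallyRel e y) {w : ℕ} {p : A} (h : IsNF e y w p)
    {i : ℕ} (hi : i ≤ e - 1 ∧ i ≠ 2 ∧ i ≠ 3) : IsNF e y (w + (e + i)) (p * y i) := by
  by_cases h0 : i = 0
  · subst h0; exact (h.mul_y0_pow 1).congr (by ring) (by ring)
  by_cases h1 : i = 1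
  · subst h1; exact (h.mul_y1 he H).congr (by ring) (by ring)
  obtain ⟨a, r, hr, rfl, rfl⟩ := h
  by_cases h3 : r ≤ 3
  · rw [nfBase, nfDeg, if_pos h3, if_pos h3]
    exact (((isNF_y (y := y) i (by omega) (by omega)).mul_y1_pow he H r).mul_y0_pow a).congr
      (by ring) (by ring)
  · rw [nfBase, nfDeg, if_neg h3, if_neg h3]
    exact ((H.isNF_mul he (i := r) (j := i) (by omega) (by omega) hr (by omega)).mul_y0_pow
      a).congr (by ring) (by ring)

end NF

/-! ### The binomials generate the kernel -/

section Generation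

variable {e : ℕ} {k : Type*} [Field k]

theorem aeval_Xv (i : ℕ) (hi : i ≤ e - 1 ∧ i ≠ 2 ∧ i ≠ 3) :
    (MvPolynomial.aeval (fun i : sallyIndex e 2 3 => (Polynomial.X : Polynomial k) ^ (e + i.1)))
      (Xv e k i) = Polynomial.X ^ (e + i) := by
  rw [Xv, dif_pos hi]
  exact MvPolynomial.aeval_X _ _

theorem sallyGens_subset (he : 10 ≤ e) : sallyGens e k ⊆ sallyIdeal e 2 3 k := by
  intro p hp
  rw [SetLike.mem_coe, sallyIdeal, RingHom.mem_ker]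
  simp only [sallyGens, Set.mem_union, Set.mem_ofPred_eq, Set.mem_insert_iff,
    Set.mem_singleton_iff, not_or] at hp
  rcases hp with ((⟨j, l, h1, h2, h3, h4, h5, rfl⟩ | ⟨j, h1, h2, rfl⟩) | ⟨j, h1, h2, rfl⟩) |
    rfl | rfl | rfl | rfl <;>
  · simp only [map_sub, map_mul, map_pow]
    repeat rw [aeval_Xv _ (by omega)]
    simp only [← pow_add, ← pow_mul]
    rw [sub_eq_zero]
    congr 1
    omega

theorem sallyRel_mk : SallyRel e (fun i => Ideal.Quotient.mk (Ideal.span (sallyGens e k))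
    (Xv e k i)) := by
  constructor <;> intros <;> simp only [← map_mul, ← map_pow] <;> rw [Ideal.Quotient.eq] <;>
    apply Ideal.subset_span <;>
    simp only [sallyGens, Set.mem_union, Set.mem_ofPred_eq, Set.mem_insert_iff,
      Set.mem_singleton_iff]
  · exact .inl (.inl (.inl ⟨_, _, ‹_›, ‹_›, ‹_›, ‹_›, ‹_›, rfl⟩))
  · exact .inl (.inl (.inr ⟨_, ‹_›, ‹_›, rfl⟩))
  · exact .inl (.inr ⟨_, ‹_›, ‹_›, rfl⟩)
  · simp
  · simp
  · simp
  · simp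

theorem Xv_val (i : sallyIndex e 2 3) : Xv e k i.1 = MvPolynomial.X i := by
  rw [Xv, dif_pos i.2]; rfl

/-- A term maps to `c t ^ w` and is congruent to `c` times a normal form of the same weight
`w`. -/
theorem monomial_nf (he : 10 ≤ e) (s : sallyIndex e 2 3 →₀ ℕ) (a : k) :
    ∃ (c : k) (w : ℕ) (q : MvPolynomial (sallyIndex e 2 3) k ⧸ Ideal.span (sallyGens e k)),
      (MvPolynomial.aeval
        (fun i : sallyIndex e 2 3 => (Polynomial.X : Polynomial k) ^ (e + i.1)))
        (MvPolynomial.monomial s a) = c • Polynomial.X ^ w ∧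
      Ideal.Quotient.mk (Ideal.span (sallyGens e k)) (MvPolynomial.monomial s a) = c • q ∧
      IsNF e (fun i => Ideal.Quotient.mk (Ideal.span (sallyGens e k)) (Xv e k i)) w q := by
  refine MvPolynomial.induction_on_monomial (motive := fun p => ∃ (c : k) (w : ℕ)
      (q : MvPolynomial (sallyIndex e 2 3) k ⧸ Ideal.span (sallyGens e k)),
      (MvPolynomial.aeval
        (fun i : sallyIndex e 2 3 => (Polynomial.X : Polynomial k) ^ (e + i.1)))
        p = c • Polynomial.X ^ w ∧
      Ideal.Quotient.mk (Ideal.span (sallyGens e k)) p = c • q ∧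
      IsNF e (fun i => Ideal.Quotient.mk (Ideal.span (sallyGens e k)) (Xv e k i)) w q)
    ?_ ?_ s a
  · intro c
    refine ⟨c, 0, 1, ?_, ?_, isNF_one he⟩
    · rw [MvPolynomial.aeval_C, pow_zero, Algebra.algebraMap_eq_smul_one]
    · rw [← Algebra.algebraMap_eq_smul_one]; rfl
  · rintro p i ⟨c, w, q, h1, h2, h3⟩
    refine ⟨c, w + (e + i.1), _, ?_, ?_, h3.mul_y he sallyRel_mk i.2⟩
    · rw [map_mul, h1, MvPolynomial.aeval_X, smul_mul_assoc, ← pow_add]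
    · rw [map_mul, h2, Xv_val, smul_mul_assoc]

/-- Modulo the binomials, a polynomial is determined by its image in `k[t]`: the linear map
sending `t ^ w` to the normal form of weight `w` recovers its residue class. -/
theorem quot_eq_lift (he : 10 ≤ e) (p : MvPolynomial (sallyIndex e 2 3) k) :
    Ideal.Quotient.mk (Ideal.span (sallyGens e k)) p =
      (Polynomial.basisMonomials k).constr k (fun w =>
        (Ideal.Quotient.mk (Ideal.span (sallyGens e k)) (Xv e k 0)) ^ (w / e - nfDeg (w % e)) *
        nfBase (fun i => Ideal.Quotient.mk (Ideal.span (sallyGens e k)) (Xv e k i)) (w % e))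
      (MvPolynomial.aeval
        (fun i : sallyIndex e 2 3 => (Polynomial.X : Polynomial k) ^ (e + i.1)) p) := by
  refine MvPolynomial.induction_on' p (fun s a => ?_) (fun p q hp hq => ?_)
  · obtain ⟨c, w, q, h1, h2, h3⟩ := monomial_nf he s a
    have hw : (Polynomial.X : Polynomial k) ^ w = Polynomial.basisMonomials k w := by
      rw [Polynomial.coe_basisMonomials, Polynomial.X_pow_eq_monomial]
    rw [h1, h2, map_smul, hw, Module.Basis.constr_basis, h3.unique]
  · rw [map_add, map_add, map_add, hp, hq]

theorem span_sallyGens (he : 10 ≤ e) : Ideal.span (sallyGens e k) = sallyIdeal e 2 3 k := by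
  refine le_antisymm (Ideal.span_le.2 (sallyGens_subset he)) fun p hp => ?_
  rw [sallyIdeal, RingHom.mem_ker] at hp
  rw [← Ideal.Quotient.eq_zero_iff_mem, quot_eq_lift he, hp, map_zero]

end Generation

/-! ### The size of the generating set -/

section Count

variable {e : ℕ} {k : Type*} [Field k]

theorem choose_count (he : 10 ≤ e) :
    (e - 4).choose 2 + (e - 4) + (e - 8) + 4 = (e - 2).choose 2 - 1 := by
  obtain ⟨t, rfl⟩ := Nat.exists_eq_add_of_le' he
  rw [show t + 10 - 4 = t + 6 by omega, show t + 10 - 2 = t + 6 + 1 + 1 by omega,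
    Nat.choose_succ_succ' (t + 6 + 1) 1, Nat.choose_succ_succ' (t + 6) 1, Nat.choose_one_right,
    Nat.choose_one_right, one_add_one_eq_two]
  omega

theorem card_lowIndices (he : 10 ≤ e) :
    (Finset.range (e - 1) \ {1, 2, 3}).card = e - 4 := by
  rw [Finset.card_sdiff_of_subset, Finset.card_range]
  · simp; omega
  · intro i; simp; omega

theorem ncard_sallyGens_le (he : 10 ≤ e) :
    (sallyGens e k).Finite ∧ (sallyGens e k).ncard ≤ (e - 2).choose 2 - 1 := by
  classical
  set S : Finset ℕ := Finset.range (e - 1) \ {1, 2, 3} with hS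
  have hSc : S.card = e - 4 := card_lowIndices he
  have hmem : ∀ j, j ≤ e - 2 → j ∉ ({1, 2, 3} : Set ℕ) → j ∈ S := by
    intro j h1 h2
    simp only [Set.mem_insert_iff, Set.mem_singleton_iff] at h2
    simp only [hS, Finset.mem_sdiff, Finset.mem_range, Finset.mem_insert, Finset.mem_singleton]
    omega
  let F1 : Finset (MvPolynomial (sallyIndex e 2 3) k) :=
    (S.offDiag.image Sym2.mk.uncurry).image fun z =>
      Xv e k (z.inf + 1) * Xv e k z.sup - Xv e k z.inf * Xv e k (z.sup + 1)
  let F2 : Finset (MvPolynomial (sallyIndex e 2 3) k) :=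
    S.image fun j => Xv e k j * (Xv e k 0) ^ 2 - Xv e k (j + 1) * Xv e k (e - 1)
  let F3 : Finset (MvPolynomial (sallyIndex e 2 3) k) :=
    (Finset.Ico 8 e).image fun j => Xv e k 4 * Xv e k (j - 4) - Xv e k 0 * Xv e k j
  let F4 : Finset (MvPolynomial (sallyIndex e 2 3) k) :=
    {(Xv e k 0) ^ 2 * Xv e k 1 - Xv e k 5 * Xv e k (e - 4),
     Xv e k 0 * (Xv e k 1) ^ 2 - Xv e k 5 * Xv e k (e - 3),
     Xv e k 4 * Xv e k (e - 4) - Xv e k 1 * Xv e k (e - 1),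
     (Xv e k 1) ^ 3 - Xv e k 4 * Xv e k (e - 1)}
  have hsub : sallyGens e k ⊆ ((F1 ∪ F2 ∪ F3 ∪ F4 : Finset _) : Set _) := by
    simp only [Finset.coe_union]
    refine Set.union_subset_union (Set.union_subset_union (Set.union_subset_union ?_ ?_) ?_) ?_
    · rintro p ⟨j, l, h1, h2, h3, h4, h5, rfl⟩
      refine Finset.mem_coe.2 (Finset.mem_image.2 ⟨s(l, j), ?_, ?_⟩)
      · exact Finset.mem_image.2 ⟨(l, j), Finset.mem_offDiag.2
          ⟨hmem l h3 h5, hmem j h2 h4, h1.ne⟩, rfl⟩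
      · rw [Sym2.inf_mk, Sym2.sup_mk, inf_eq_left.2 h1.le, sup_eq_right.2 h1.le]
    · rintro p ⟨j, h1, h2, rfl⟩
      exact Finset.mem_coe.2 (Finset.mem_image.2 ⟨j, hmem j h1 h2, rfl⟩)
    · rintro p ⟨j, h1, h2, rfl⟩
      exact Finset.mem_coe.2 (Finset.mem_image.2 ⟨j, Finset.mem_Ico.2 ⟨h1, by omega⟩, rfl⟩)
    · intro p hp
      simpa [F4] using hp
  refine ⟨(Finset.finite_toSet _).subset hsub, ?_⟩
  have h1 : F1.card ≤ (e - 4).choose 2 :=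
    Finset.card_image_le.trans (by rw [Sym2.card_image_offDiag, hSc])
  have h2 : F2.card ≤ e - 4 := Finset.card_image_le.trans hSc.le
  have h3 : F3.card ≤ e - 8 := Finset.card_image_le.trans (by rw [Nat.card_Ico])
  have h4 : F4.card ≤ 4 := Finset.card_le_four
  calc (sallyGens e k).ncard ≤ (F1 ∪ F2 ∪ F3 ∪ F4).card := by
        rw [← Set.ncard_coe_finset]
        exact Set.ncard_le_ncard hsub (Finset.finite_toSet _)
    _ ≤ F1.card + F2.card + F3.card + F4.card := by
        have a1 := Finset.card_union_le (F1 ∪ F2 ∪ F3) F4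
        have a2 := Finset.card_union_le (F1 ∪ F2) F3
        have a3 := Finset.card_union_le F1 F2
        omega
    _ ≤ (e - 2).choose 2 - 1 := by rw [← choose_count he]; omega

end Count

/-! ### The lower bound on the number of generators -/

section LowerBound

variable {e : ℕ} {k : Type*} [Field k]

theorem Xv_mem (i : ℕ) :
    Xv e k i ∈ MvPolynomial.idealOfVars (sallyIndex e 2 3) k := by
  rw [Xv]
  split_ifs with h
  · exact Ideal.subset_span ⟨_, rfl⟩
  · exact zero_mem _

theorem sallyIdeal_le_sq (he : 10 ≤ e) :
    sallyIdeal e 2 3 k ≤ MvPolynomial.idealOfVars (sallyIndex e 2 3) k ^ 2 := by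
  rw [← span_sallyGens he, Ideal.span_le]
  have hq : ∀ i j, Xv e k i * Xv e k j ∈
      MvPolynomial.idealOfVars (sallyIndex e 2 3) k ^ 2 := fun i j => by
    rw [pow_two]; exact Ideal.mul_mem_mul (Xv_mem i) (Xv_mem j)
  intro p hp
  simp only [sallyGens, Set.mem_union, Set.mem_ofPred_eq, Set.mem_insert_iff,
    Set.mem_singleton_iff] at hp
  rcases hp with ((⟨j, l, h1, h2, h3, h4, h5, rfl⟩ | ⟨j, h1, h2, rfl⟩) | ⟨j, h1, h2, rfl⟩) |
    rfl | rfl | rfl | rfl <;> refine Ideal.sub_mem _ ?_ (hq _ _)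
  · exact hq _ _
  · rw [pow_two (Xv e k 0)]; exact Ideal.mul_mem_left _ _ (hq _ _)
  · exact hq _ _
  · rw [pow_two (Xv e k 0)]; exact Ideal.mul_mem_right _ _ (hq _ _)
  · rw [pow_two (Xv e k 1)]; exact Ideal.mul_mem_left _ _ (hq _ _)
  · exact hq _ _
  · rw [pow_succ (Xv e k 1), pow_two (Xv e k 1)]; exact Ideal.mul_mem_right _ _ (hq _ _)

/-- The exponent vector of the quadratic monomial `X_i X_j`. -/
noncomputable def quadExp {ι : Type*} (z : Sym2 ι) : ι →₀ ℕ :=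
  Sym2.lift ⟨fun i j => Finsupp.single i 1 + Finsupp.single j 1, fun _ _ => add_comm _ _⟩ z

theorem quadExp_mk {ι : Type*} (i j : ι) :
    quadExp s(i, j) = Finsupp.single i 1 + Finsupp.single j 1 := rfl

theorem quadExp_injective {ι : Type*} : Function.Injective (quadExp (ι := ι)) := by
  intro z w
  induction z with | _ a b
  induction w with | _ c d
  rw [quadExp_mk, quadExp_mk, Finsupp.single_add_single_eq_single_add_single one_ne_zero
    one_ne_zero, Sym2.eq_iff]
  rintro (h | h | h)
  · exact .inl h
  · exact .inr h.2
  · exact absurd h.1 (by decide)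

theorem degree_quadExp {ι : Type*} (z : Sym2 ι) : (quadExp z).degree = 2 := by
  induction z with | _ a b
  rw [quadExp_mk, map_add, Finsupp.degree_single, Finsupp.degree_single]

/-- For `p` of order at least two, the quadratic coefficients of `r * p` depend on `r` only
through its constant term. -/
theorem coeff_quad_mul {ι : Type*} {p : MvPolynomial ι k}
    (hp : p ∈ MvPolynomial.idealOfVars ι k ^ 2) (r : MvPolynomial ι k) (z : Sym2 ι) :
    (r * p).coeff (quadExp z) = r.coeff 0 * p.coeff (quadExp z) := by
  have hr : r - MvPolynomial.C (r.coeff 0) ∈ MvPolynomial.idealOfVars ι k ^ 1 := by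
    rw [MvPolynomial.mem_pow_idealOfVars_iff']
    intro x hx
    obtain rfl : x = 0 := (Finsupp.degree_eq_zero_iff x).1 (by omega)
    simp
  have h3 : (r - MvPolynomial.C (r.coeff 0)) * p ∈ MvPolynomial.idealOfVars ι k ^ 3 := by
    rw [show 3 = 1 + 2 from rfl, pow_add]
    exact Ideal.mul_mem_mul hr hp
  have := (MvPolynomial.mem_pow_idealOfVars_iff' 3 _).1 h3 (quadExp z)
    (by rw [degree_quadExp]; omega)
  rwa [sub_mul, MvPolynomial.coeff_sub, MvPolynomial.coeff_C_mul, sub_eq_zero] at this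

/-- The indices in `J` other than `0`. -/
def posIndex (e : ℕ) : Finset (sallyIndex e 2 3) :=
  ((Finset.range e).erase 0).subtype (fun i => i ≤ e - 1 ∧ i ≠ 2 ∧ i ≠ 3)

theorem card_posIndex (he : 10 ≤ e) : (posIndex e).card = e - 3 := by
  refine (Finset.card_subtype _ _).trans ?_
  have : {i ∈ (Finset.range e).erase 0 | i ≤ e - 1 ∧ i ≠ 2 ∧ i ≠ 3} =
      Finset.range e \ {0, 2, 3} := by
    ext i; simp; omega
  rw [this, Finset.card_sdiff_of_subset, Finset.card_range]
  · simp
  · intro i; simp; omega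

theorem mem_posIndex (he : 10 ≤ e) (i : sallyIndex e 2 3) : i ∈ posIndex e ↔ i.1 ≠ 0 := by
  have := i.2
  refine Finset.mem_subtype.trans ?_
  simp
  omega

/-- The element `i` of the index set `J`. -/
def sIdx (e i : ℕ) (h : i ≤ e - 1 ∧ i ≠ 2 ∧ i ≠ 3) : sallyIndex e 2 3 := ⟨i, h⟩

theorem Xv_eq (i : ℕ) (h : i ≤ e - 1 ∧ i ≠ 2 ∧ i ≠ 3) :
    Xv e k i = MvPolynomial.X (sIdx e i h) := Xv_val (sIdx e i h)

/-- The pairs `{i, j}` of indices in `J \ {0}` other than `{1, 1}`; they label the quadratic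
monomials that are not normal forms and do not involve `X₀`. -/
noncomputable def redPairs (e : ℕ) (he : 10 ≤ e) : Finset (Sym2 (sallyIndex e 2 3)) :=
  haveI := Classical.decEq (sallyIndex e 2 3)
  (posIndex e).sym2.erase s(sIdx e 1 (by omega), sIdx e 1 (by omega))

theorem card_redPairs (he : 10 ≤ e) : (redPairs e he).card = (e - 2).choose 2 - 1 := by
  classical
  rw [redPairs, Finset.card_erase_of_mem, Finset.card_sym2, card_posIndex he,
    show e - 3 + 1 = e - 2 by omega]
  rw [Finset.mk_mem_sym2_iff, mem_posIndex he]
  simp [sIdx]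

/-- No normal form is one of the monomials labelled by `redPairs`. -/
theorem coeff_nf (he : 10 ≤ e) {z : Sym2 (sallyIndex e 2 3)} (hz : z ∈ redPairs e he)
    (a r : ℕ) (hr : r < e) :
    (Xv e k 0 ^ a * nfBase (Xv e k) r).coeff (quadExp z) = 0 := by
  classical
  induction z with | _ i j
  rw [redPairs, Finset.mem_erase, Finset.mk_mem_sym2_iff, mem_posIndex he, mem_posIndex he] at hz
  obtain ⟨h11, hi, hj⟩ := hz
  have ho : ∀ h, sIdx e 0 h ≠ i ∧ sIdx e 0 h ≠ j := fun h =>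
    ⟨fun hv => hi (by rw [← hv]; rfl), fun hv => hj (by rw [← hv]; rfl)⟩
  -- if `a [0] + b [v] = [i] + [j]` with `v ≠ 0`, then `a = 0`, `b = 2` and `i = j = v`
  have key : ∀ (v : sallyIndex e 2 3) (b : ℕ), v.1 ≠ 0 →
      (b = 2 → v = sIdx e 1 (by omega)) →
      (Xv e k 0 ^ a * MvPolynomial.X v ^ b).coeff (quadExp s(i, j)) = 0 := by
    intro v b hvo hb
    have hvo' : v ≠ sIdx e 0 (by omega) := fun h => hvo (by rw [h]; rfl)
    rw [Xv_eq 0 (by omega), MvPolynomial.X_pow_eq_monomial, MvPolynomial.X_pow_eq_monomial,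
      MvPolynomial.monomial_mul, MvPolynomial.coeff_monomial, if_neg]
    rw [quadExp_mk]
    intro h
    have e0 := DFunLike.congr_fun h (sIdx e 0 (by omega))
    have ei := DFunLike.congr_fun h i
    have ej := DFunLike.congr_fun h j
    have hd := congrArg Finsupp.degree h
    simp only [map_add, Finsupp.degree_single] at hd
    simp only [Finsupp.add_apply, Finsupp.single_apply, if_true, if_neg hvo',
      if_neg (ho _).1, if_neg (ho _).2, if_neg (ho _).1.symm, if_neg (ho _).2.symm] at e0 ei ej
    have hvi : v = i := by
      by_contra hne
      rw [if_neg hne] at ei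
      omega
    have hvj : v = j := by
      by_contra hne
      rw [if_neg hne] at ej
      omega
    have := hb (by omega)
    exact h11 (by rw [← hvi, ← hvj, this])
  by_cases h3 : r ≤ 3
  · rw [nfBase, if_pos h3, Xv_eq 1 (by omega)]
    exact key _ _ one_ne_zero fun _ => rfl
  · rw [nfBase, if_neg h3, Xv_eq r (by omega), ← pow_one (MvPolynomial.X (sIdx e r _))]
    exact key _ _ (by change r ≠ 0; omega) fun h => absurd h (by decide)

theorem map_nfBase {A B : Type*} [CommRing A] [CommRing B] (f : A →+* B) (y : ℕ → A) (r : ℕ) :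
    nfBase (fun i => f (y i)) r = f (nfBase y r) := by
  unfold nfBase
  split_ifs <;> simp

/-- Any generating set of the kernel has at least `C(e - 2, 2) - 1` elements: taking the
coefficients at the monomials labelled by `redPairs` sends the kernel onto `k ^ redPairs`, and the
images of the generators span this space. -/
theorem card_le_of_span (he : 10 ≤ e) (F : Finset (MvPolynomial (sallyIndex e 2 3) k))
    (hF : Ideal.span (F : Set (MvPolynomial (sallyIndex e 2 3) k)) = sallyIdeal e 2 3 k) :
    (e - 2).choose 2 - 1 ≤ F.card := by
  classical
  let Q : MvPolynomial (sallyIndex e 2 3) k →ₗ[k] (redPairs e he → k) :=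
    LinearMap.pi fun z => MvPolynomial.lcoeff k (quadExp z.1)
  have hQ : ∀ p z, Q p z = p.coeff (quadExp z.1) := fun _ _ => rfl
  have hspan : ∀ p ∈ sallyIdeal e 2 3 k,
      Q p ∈ Submodule.span k ((F.image Q : Finset _) : Set (redPairs e he → k)) := by
    intro p hp
    rw [← hF] at hp
    induction hp using Submodule.span_induction with
    | mem x hx => exact Submodule.subset_span (Finset.mem_coe.2 (Finset.mem_image_of_mem Q hx))
    | zero => rw [map_zero]; exact zero_mem _
    | add x y _ _ hx hy => rw [map_add]; exact add_mem hx hy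
    | smul r x hx ih =>
      have hx2 := sallyIdeal_le_sq he (hF.le hx)
      have : Q (r • x) = r.coeff 0 • Q x := by
        ext z
        rw [hQ, smul_eq_mul, coeff_quad_mul hx2, Pi.smul_apply, hQ, smul_eq_mul]
      rw [this]
      exact Submodule.smul_mem _ _ ih
  have htop : Submodule.span k ((F.image Q : Finset _) : Set (redPairs e he → k)) = ⊤ := by
    rw [eq_top_iff, ← (Pi.basisFun k (redPairs e he)).span_eq, Submodule.span_le]
    rintro _ ⟨⟨z, hz⟩, rfl⟩
    obtain ⟨h, hh, hhz⟩ : ∃ h ∈ sallyIdeal e 2 3 k,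
        Q h = Pi.basisFun k (redPairs e he) ⟨z, hz⟩ := by
      have hz' := hz
      induction z with | _ i j
      obtain ⟨a, r, hr, h1, -⟩ := ((isNF_one he).mul_y he (sallyRel_mk (k := k)) i.2).mul_y he
        sallyRel_mk j.2
      rw [map_nfBase, one_mul, ← map_mul, ← map_pow, ← map_mul, Ideal.Quotient.eq,
        span_sallyGens he, Xv_val, Xv_val] at h1
      refine ⟨_, h1, ?_⟩
      have hm : (MvPolynomial.X i * MvPolynomial.X j : MvPolynomial (sallyIndex e 2 3) k) =
          MvPolynomial.monomial (quadExp s(i, j)) 1 := by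
        rw [quadExp_mk, MvPolynomial.X, MvPolynomial.X, MvPolynomial.monomial_mul, one_mul]
      ext ⟨z, hz⟩
      rw [hQ, MvPolynomial.coeff_sub, coeff_nf he hz a r hr, sub_zero, hm,
        MvPolynomial.coeff_monomial, Pi.basisFun_apply, Pi.single_apply]
      simp only [quadExp_injective.eq_iff, Subtype.mk.injEq, eq_comm]
    rw [← hhz]
    exact hspan h hh
  have h1 := finrank_span_finset_le_card (R := k) (F.image Q)
  rw [Set.finrank, htop, finrank_top, Module.finrank_fintype_fun_eq_card, Fintype.card_coe,
    card_redPairs] at h1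
  exact h1.trans Finset.card_image_le

end LowerBound

theorem stmt_19 (e : ℕ) (k : Type*) [Field k] (he : 10 ≤ e) :
    Ideal.span (sallyGens e k) = sallyIdeal e 2 3 k ∧
    (sallyGens e k).ncard = (e - 2).choose 2 - 1 ∧
    sallyMu e 2 3 k = (e - 2).choose 2 - 1 := by
  obtain ⟨hfin, hle⟩ := ncard_sallyGens_le (k := k) he
  have hspan : Ideal.span (hfin.toFinset : Set (MvPolynomial (sallyIndex e 2 3) k)) =
      sallyIdeal e 2 3 k := by rw [hfin.coe_toFinset, span_sallyGens he]
  have hcard : hfin.toFinset.card = (sallyGens e k).ncard :=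
    (Set.ncard_eq_toFinset_card _ hfin).symm
  have hncard : (sallyGens e k).ncard = (e - 2).choose 2 - 1 :=
    le_antisymm hle (hcard ▸ card_le_of_span he _ hspan)
  refine ⟨span_sallyGens he, hncard, le_antisymm ?_ ?_⟩
  · exact Nat.sInf_le ⟨hfin.toFinset, hcard.trans hncard, hspan⟩
  · refine le_csInf ⟨_, hfin.toFinset, rfl, hspan⟩ ?_
    rintro c ⟨F, rfl, hF⟩
    exact card_le_of_span he F hF
end
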